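/- Let W be the Wiener measure on Ω and let α ∈ (0,1/2). Then: (i) for every ω̄ ∈ C_α^crit, the local order ord_loc W(ω̄) exists and equals 2(α^{−1} − 1); (ii) the Hausdorff order of C_α^crit equals α^{−1}; (iii) the minimum of underline-ord_loc W(·) over Ω equals 2. -/

import Mathlib

open scoped ENNReal NNReal Topology
open Filter MeasureTheory Metric Set

noncomputable section

namespace Multifractal


/-- The `δ`-level Hausdorff pre-measure `H^h_δ` associated to a gauge `h`. -/
def hMeasAux {X : Type*} [MetricSpace X] (h : ℝ → ℝ) (δ : ℝ≥0∞) (E : Set X) : ℝ≥0∞ :=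
  ⨅ (c : ℕ → X) (r : ℕ → ℝ) (_ : ∀ n, 0 < r n ∧ ENNReal.ofReal (r n) ≤ δ)
    (_ : E ⊆ ⋃ n, Metric.ball (c n) (r n)), ∑' n, ENNReal.ofReal (h (r n))

/-- The `h`-Hausdorff measure. -/
def hMeas {X : Type*} [MetricSpace X] (h : ℝ → ℝ) (E : Set X) : ℝ≥0∞ :=
  ⨆ (δ : ℝ≥0∞) (_ : 0 < δ), hMeasAux h δ E

/-- `Ω`: continuous paths on `[0,1]` vanishing at `0`, with the uniform metric. -/
abbrev PathSpace : Type := {f : C(unitInterval, ℝ) // f 0 = 0}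

instance : MeasurableSpace PathSpace := borel PathSpace
instance : BorelSpace PathSpace := ⟨rfl⟩

/-- `μ` is a centered Gaussian process measure on path space with covariance `K`:
a probability measure under which every finite linear combination of coordinates
is a centered real Gaussian with the variance given by `K`. -/
def IsGaussianProcess (μ : Measure PathSpace) (K : unitInterval → unitInterval → ℝ) : Prop :=
  IsProbabilityMeasure μ ∧
  ∀ (n : ℕ) (t : Fin n → unitInterval) (c : Fin n → ℝ),
    Measure.map (fun ω : PathSpace => ∑ i, c i * ω.1 (t i)) μ =
      ProbabilityTheory.gaussianReal 0
        (Real.toNNReal (∑ i, ∑ j, c i * c j * K (t i) (t j)))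

/-- `W` is the Wiener measure: the coordinate process is centered Gaussian with
covariance `min s t`. -/
def IsWienerMeasure (W : Measure PathSpace) : Prop :=
  IsGaussianProcess W (fun s t => min (s : ℝ) (t : ℝ))

/-- `μ` is the law of fractional Brownian motion with Hurst parameter `H`. -/
def IsFBM (H : ℝ) (μ : Measure PathSpace) : Prop :=
  IsGaussianProcess μ (fun s t =>
    ((s : ℝ) ^ (2*H) + (t : ℝ) ^ (2*H) - |(t : ℝ) - (s : ℝ)| ^ (2*H)) / 2)

/-- Clamping of a real number into the unit interval. -/
def clampI (t : ℝ) : unitInterval :=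
  ⟨min (max t 0) 1, Set.mem_Icc.mpr ⟨le_min (le_max_right _ _) zero_le_one, min_le_right _ _⟩⟩

/-- The grid point `j/n` of the unit interval. -/
def gridPt (n j : ℕ) : unitInterval := clampI ((j : ℝ) / n)

/-- The discrete quadratic variation `Q_n(ω)`. -/
def Qvar (ω : PathSpace) (n : ℕ) : ℝ :=
  Real.sqrt ((1 / (n : ℝ)) *
    ∑ i ∈ Finset.range n, (ω.1 (gridPt n (i+1)) - ω.1 (gridPt n i)) ^ 2)

/-- Lower Orey exponent `q^-(ω)`. -/
def oreyLower (ω : PathSpace) : EReal :=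
  liminf (fun n : ℕ => ((-Real.log (Qvar ω n) / Real.log n : ℝ) : EReal)) atTop

/-- Upper Orey exponent `q^+(ω)`. -/
def oreyUpper (ω : PathSpace) : EReal :=
  limsup (fun n : ℕ => ((-Real.log (Qvar ω n) / Real.log n : ℝ) : EReal)) atTop

/-- The set `C_a` of `a`-Hölder paths. -/
def holderSet (a : ℝ) : Set PathSpace :=
  {ω | ∃ C : ℝ, ∀ x y : unitInterval, |ω.1 x - ω.1 y| ≤ C * |(x : ℝ) - (y : ℝ)| ^ a}

/-- The set `C_a^- = ⋂_{0<b<a} C_b` of nearly `a`-Hölder paths. -/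
def holderMinus (a : ℝ) : Set PathSpace := ⋂ b ∈ Set.Ioo (0:ℝ) a, holderSet b

/-- The set `C_q^crit` of critical `q`-Hölder paths: nearly `q`-Hölder paths whose
Orey exponent exists and equals `q`. -/
def holderCrit (q : ℝ) : Set PathSpace :=
  {ω | ω ∈ holderMinus q ∧ oreyLower ω = (q : EReal) ∧ oreyUpper ω = (q : EReal)}

/-- The set `Ω^crit` of critical Hölder paths. -/
def pathCrit : Set PathSpace := ⋃ q ∈ Set.Ioo (0:ℝ) 1, holderCrit q

/-- The lower local order of a measure `μ` on path space at `ω`. -/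
def lowerLocOrd (μ : Measure PathSpace) (ω : PathSpace) : EReal :=
  liminf (fun ε : ℝ =>
    ((Real.log (-Real.log ((μ (Metric.ball ω ε)).toReal)) / (-Real.log ε) : ℝ) : EReal))
    (𝓝[>] (0:ℝ))

/-- The upper local order of a measure `μ` on path space at `ω`. -/
def upperLocOrd (μ : Measure PathSpace) (ω : PathSpace) : EReal :=
  limsup (fun ε : ℝ =>
    ((Real.log (-Real.log ((μ (Metric.ball ω ε)).toReal)) / (-Real.log ε) : ℝ) : EReal))
    (𝓝[>] (0:ℝ))

/-- The Hausdorff order of a set of paths: `sup {α > 0 : H^{h_α}(A) = ∞}` where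
`h_α(ε) = exp(-ε^{-α})`. -/
def ordH (A : Set PathSpace) : ℝ≥0∞ :=
  ⨆ (α : ℝ) (_ : 0 < α ∧ hMeas (fun ε : ℝ => Real.exp (-(ε ^ (-α)))) A = ∞),
    ENNReal.ofReal α

/-- The level set `E(ξ)` of paths at which the local order of `μ` exists and
equals `ξ`. -/
def levelOrd (μ : Measure PathSpace) (ξ : ℝ) : Set PathSpace :=
  {ω | lowerLocOrd μ ω = (ξ : EReal) ∧ upperLocOrd μ ω = (ξ : EReal)}

/-- The cylinder `C_n(ω̄, ε)` around `ω̄` of depth `n` and radius `ε`. -/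
def cylinder (ωb : PathSpace) (n : ℕ) (ε : ℝ) : Set PathSpace :=
  {ω | ∀ j ∈ Finset.Icc 1 n, |ω.1 (gridPt n j) - ωb.1 (gridPt n j)| ≤ ε}

/-- The affine interpolation `L̄_j` of `ω̄` on `[(j-1)/n, j/n]`, evaluated at `t`. -/
def affInterp (ωb : PathSpace) (n j : ℕ) (t : ℝ) : ℝ :=
  ωb.1 (gridPt n (j-1)) +
    (t - ((j-1 : ℕ) : ℝ) / n) * n * (ωb.1 (gridPt n j) - ωb.1 (gridPt n (j-1)))

/-- The maximal deviation `Δ_n(ω̄)` of `ω̄` from its chords on the `1/n`-grid. -/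
def chordDev (ωb : PathSpace) (n : ℕ) : ℝ :=
  sSup {d : ℝ | ∃ j ∈ Finset.Icc 1 n, ∃ t ∈ Set.Icc (((j-1 : ℕ) : ℝ) / n) ((j : ℝ) / n),
    d = |ωb.1 (clampI t) - affInterp ωb n j t|}

/-!
Under the Wiener measure the Faber-Schauder coefficients of a path are independent centred
Gaussians, the `2 ^ j` coefficients of generation `j` having variance of order `2 ^ (-j)`. Let `ω̄`
be `β`-Hölder with `β < 1 / 2`. A path is `ε`-close to `ω̄` as soon as its coefficients follow those
of `ω̄` up to the generation `J` with `2 ^ (-J β) ≈ ε` and are small beyond. The second condition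
has probability at least `1 / 2`, and each of the `2 ^ J` coefficients in the first one costs
a factor at least `exp (-C 2 ^ (J (1 - 2 β)))`, so that the ball has measure at least
`exp (-C 2 ^ (J (2 - 2 β)))` and the upper local order at `ω̄` is at most `2 (β⁻¹ - 1)`.

Conversely, the `n` increments over a grid of mesh `1 / n ≈ ε ^ 2` are independent and each is
confined to an interval with probability at most `1 / 2`, hence the lower local order is at least
`2` everywhere. If moreover `Q_n(ω̄) ≈ n ^ (-s)`, then at the scale `n ^ (-s) ≈ ε` every path of the
ball has scalar product of order `n Q_n(ω̄) ^ 2` with the increments of `ω̄`; this is a Gaussian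
deviation of `n Q_n(ω̄)` standard deviations, which gives the lower bound `2 (s⁻¹ - 1)`.

For the Hausdorff order, a Hölder ball of exponent `β` is covered by `exp (n ^ (1 + o(1)))` balls of
radius of order `n ^ (-β)`, coded by rounded values at the grid points. In the other direction, all
paths with Faber-Schauder coefficients `± 2 ^ (-j α)` are critical, and under independent fair signs
a ball of radius `2 ^ (-j α) / 4` has probability at most `2 ^ (-2 ^ j)`, so that the mass
distribution principle applies.
-/

open ProbabilityTheory

/-! ### Coordinates of a Gaussian process and of the Wiener measure -/

section Coordinates

lemma continuous_eval (t : unitInterval) : Continuous fun ω : PathSpace => ω.1 t := by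
  fun_prop

variable {μ W : Measure PathSpace} {K : unitInterval → unitInterval → ℝ}

lemma IsGaussianProcess.hasLaw_sum {n : ℕ} (hμ : IsGaussianProcess μ K)
    (t : Fin n → unitInterval) (c : Fin n → ℝ) :
    HasLaw (fun ω : PathSpace => ∑ i, c i * ω.1 (t i))
      (gaussianReal 0 (∑ i, ∑ j, c i * c j * K (t i) (t j)).toNNReal) μ :=
  ⟨by fun_prop, hμ.2 n t c⟩

lemma IsGaussianProcess.isGaussianProcess_eval (hμ : IsGaussianProcess μ K) :
    ProbabilityTheory.IsGaussianProcess (fun t (ω : PathSpace) => ω.1 t) μ where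
  hasGaussianLaw I := by
    have hcoord : Measurable fun ω : PathSpace => I.restrict (ω.1 ·) :=
      measurable_pi_lambda _ fun t => (continuous_eval _).measurable
    refine ⟨isGaussian_of_map_eq_gaussianReal fun L => ?_⟩
    let c : I → ℝ := fun t => L (Pi.single t 1)
    have hL : ∀ ω : PathSpace, L (I.restrict (ω.1 ·)) = ∑ t, c t * ω.1 t := fun ω => by
      conv_lhs => rw [pi_eq_sum_univ' (I.restrict (ω.1 ·))]
      simp [c, mul_comm, Finset.restrict]
    let e := Fintype.equivFin I
    have hlaw := (hμ.hasLaw_sum (fun i => (e.symm i).1) (c ∘ e.symm)).map_eq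
    refine ⟨0, _, Eq.trans ?_ hlaw⟩
    rw [Measure.map_map (by fun_prop) hcoord]
    congr 1
    ext ω
    exact (hL ω).trans (Equiv.sum_comp e.symm fun t => c t * ω.1 t).symm

lemma IsWienerMeasure.variance_sum {n : ℕ} (hW : IsWienerMeasure W) (t : Fin n → unitInterval)
    (c : Fin n → ℝ) (hc : 0 ≤ ∑ i, ∑ j, c i * c j * min (t i : ℝ) (t j)) :
    Var[fun ω : PathSpace => ∑ i, c i * ω.1 (t i); W] =
      ∑ i, ∑ j, c i * c j * min (t i : ℝ) (t j) := by
  rw [(IsGaussianProcess.hasLaw_sum hW t c).variance_eq, variance_id_gaussianReal,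
    Real.coe_toNNReal _ hc]

lemma IsWienerMeasure.memLp_eval (hW : IsWienerMeasure W) (t : unitInterval) :
    MemLp (fun ω : PathSpace => ω.1 t) 2 W :=
  ((IsGaussianProcess.isGaussianProcess_eval hW).hasGaussianLaw_eval t).memLp_two

lemma IsWienerMeasure.variance_eval (hW : IsWienerMeasure W) (t : unitInterval) :
    Var[fun ω : PathSpace => ω.1 t; W] = t := by
  simpa using hW.variance_sum ![t] ![1] (by simpa using t.2.1)

lemma IsWienerMeasure.covariance_eval (hW : IsWienerMeasure W) (s t : unitInterval) :
    cov[fun ω : PathSpace => ω.1 s, fun ω => ω.1 t; W] = min (s : ℝ) t := by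
  have := hW.1
  have hquad : ∑ i, ∑ j, (![1, 1] : Fin 2 → ℝ) i * ![1, 1] j *
      min ((![s, t] : Fin 2 → unitInterval) i : ℝ) (![s, t] j) = s + t + 2 * min (s : ℝ) t := by
    simp only [Fin.sum_univ_two, Matrix.cons_val_zero, Matrix.cons_val_one, min_self,
      min_comm (t : ℝ) s]
    ring
  have hvar := hW.variance_sum ![s, t] ![1, 1] <| by
    rw [hquad]
    have := s.2.1
    have := t.2.1
    positivity
  rw [hquad] at hvar
  simp only [Fin.sum_univ_two, Matrix.cons_val_zero, Matrix.cons_val_one, one_mul] at hvar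
  rw [variance_fun_add (hW.memLp_eval s) (hW.memLp_eval t), hW.variance_eval,
    hW.variance_eval] at hvar
  linarith

end Coordinates

/-! ### Schauder coefficients -/

section Grid

lemma coe_clampI {t : ℝ} (h0 : 0 ≤ t) (h1 : t ≤ 1) : (clampI t : ℝ) = t := by
  simp [clampI, h0, h1]

lemma coe_gridPt {n j : ℕ} (h : j ≤ n) : (gridPt n j : ℝ) = j / n :=
  coe_clampI (by positivity) (div_le_one_of_le₀ (by exact_mod_cast h) (by positivity))

lemma gridPt_zero_right (n : ℕ) : gridPt n 0 = 0 := by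
  ext
  simp [coe_gridPt n.zero_le]

lemma gridPt_self {n : ℕ} (hn : n ≠ 0) : gridPt n n = 1 := by
  ext
  simp [coe_gridPt le_rfl, hn]

lemma gridPt_mono (n : ℕ) : Monotone (gridPt n) := fun i j hij => by
  have hdiv : (i : ℝ) / n ≤ j / n := by gcongr
  exact Subtype.coe_le_coe.1 (min_le_min_right 1 (max_le_max_right 0 hdiv))

lemma gridPt_mul_mul {m : ℕ} (hm : m ≠ 0) (n j : ℕ) : gridPt (n * m) (j * m) = gridPt n j := by
  unfold gridPt
  congr 1
  push_cast
  exact mul_div_mul_right _ _ (by exact_mod_cast hm)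

lemma gridPt_two_pow_succ (j k : ℕ) : gridPt (2 ^ (j + 1)) (2 * k) = gridPt (2 ^ j) k := by
  rw [pow_succ, mul_comm 2 k, gridPt_mul_mul two_ne_zero]

lemma coe_gridPt_two_pow_midpoint {j k : ℕ} (hk : k < 2 ^ j) :
    (gridPt (2 ^ (j + 1)) (2 * k + 1) : ℝ) =
      ((gridPt (2 ^ j) k : ℝ) + gridPt (2 ^ j) (k + 1)) / 2 := by
  rw [coe_gridPt (by rw [pow_succ]; omega), coe_gridPt hk.le, coe_gridPt hk]
  push_cast
  field_simp
  ring

lemma gridPt_two_pow_le_or_le {i j : ℕ} (hij : i ≤ j) (k l : ℕ) :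
    gridPt (2 ^ i) l ≤ gridPt (2 ^ j) k ∨ gridPt (2 ^ j) (k + 1) ≤ gridPt (2 ^ i) l := by
  obtain ⟨m, rfl⟩ := Nat.exists_eq_add_of_le hij
  rw [← gridPt_mul_mul (m := 2 ^ m) (by positivity) (2 ^ i) l, ← pow_add]
  exact (le_or_gt (l * 2 ^ m) k).imp (gridPt_mono _ ·) (gridPt_mono _ ·)

lemma gridPt_midpoint_le_or_le {i j k l : ℕ} (hij : i ≤ j) (hne : ¬(i = j ∧ l = k)) :
    gridPt (2 ^ (i + 1)) (2 * l + 1) ≤ gridPt (2 ^ j) k ∨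
      gridPt (2 ^ j) (k + 1) ≤ gridPt (2 ^ (i + 1)) (2 * l + 1) := by
  rcases hij.lt_or_eq with hlt | rfl
  · exact gridPt_two_pow_le_or_le hlt _ _
  · rw [← gridPt_two_pow_succ i k, ← gridPt_two_pow_succ i (k + 1)]
    have hlk : 2 * l + 1 ≤ 2 * k ∨ 2 * (k + 1) ≤ 2 * l + 1 := by omega
    exact hlk.imp (gridPt_mono _ ·) (gridPt_mono _ ·)

end Grid

section Schauder

/-- The second difference of `f` at the midpoint of the `k`-th dyadic interval of generation `j`.
Up to normalization this is the coefficient of `f` in the Faber-Schauder basis. -/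
def secDiff (f : unitInterval → ℝ) (j k : ℕ) : ℝ :=
  f (gridPt (2 ^ (j + 1)) (2 * k + 1)) - (f (gridPt (2 ^ j) k) + f (gridPt (2 ^ j) (k + 1))) / 2

/-- The index set of the Faber-Schauder basis: `none` stands for the function `t ↦ t`, and
`some ⟨j, k⟩` for the hat function on the `k`-th dyadic interval of generation `j`. -/
abbrev SchauderIdx : Type := Option (Σ j : ℕ, Fin (2 ^ j))

/-- The Faber-Schauder coefficients of a function vanishing at `0`. -/
def schauderCoef (f : unitInterval → ℝ) : SchauderIdx → ℝ
  | none => f 1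
  | some ⟨j, k⟩ => secDiff f j k

/-- The variances of the Faber-Schauder coefficients of Brownian motion. -/
def schauderVar : SchauderIdx → ℝ≥0
  | none => 1
  | some ⟨j, _⟩ => (2 ^ j)⁻¹ / 4

lemma schauderVar_ne_zero (o : SchauderIdx) : schauderVar o ≠ 0 := by
  rcases o with _ | _ <;> simp [schauderVar]

lemma continuous_schauderCoef (o : SchauderIdx) :
    Continuous fun ω : PathSpace => schauderCoef ω.1 o := by
  rcases o with _ | _ <;> simp only [schauderCoef, secDiff] <;> fun_prop

lemma secDiff_sub (f g : unitInterval → ℝ) (j k : ℕ) :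
    secDiff (f - g) j k = secDiff f j k - secDiff g j k := by
  simp only [secDiff, Pi.sub_apply]
  ring

lemma abs_secDiff_le_of_abs_le {f : unitInterval → ℝ} {ε : ℝ} (h : ∀ t, |f t| ≤ ε) (j k : ℕ) :
    |secDiff f j k| ≤ 2 * ε := by
  have hm := abs_le.1 (h (gridPt (2 ^ (j + 1)) (2 * k + 1)))
  have hl := abs_le.1 (h (gridPt (2 ^ j) k))
  have hr := abs_le.1 (h (gridPt (2 ^ j) (k + 1)))
  rw [abs_le, secDiff]
  constructor <;> linarith [hm.1, hm.2, hl.1, hl.2, hr.1, hr.2]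

lemma secDiff_min_eq_zero {j k : ℕ} (hk : k < 2 ^ j) {s : unitInterval}
    (hs : s ≤ gridPt (2 ^ j) k ∨ gridPt (2 ^ j) (k + 1) ≤ s) :
    secDiff (fun t => min (s : ℝ) t) j k = 0 := by
  have hlr := Subtype.coe_le_coe.2 (gridPt_mono (2 ^ j) k.le_succ)
  rw [secDiff, coe_gridPt_two_pow_midpoint hk]
  rcases hs with hs | hs <;> have hs' := Subtype.coe_le_coe.2 hs
  · rw [min_eq_left (by linarith), min_eq_left hs', min_eq_left (by linarith)]
    ring
  · rw [min_eq_right (by linarith), min_eq_right (by linarith), min_eq_right hs']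
    ring

lemma secDiff_min_midpoint {j k : ℕ} (hk : k < 2 ^ j) :
    secDiff (fun t => min (gridPt (2 ^ (j + 1)) (2 * k + 1) : ℝ) t) j k = (2 ^ j)⁻¹ / 4 := by
  have hlr := Subtype.coe_le_coe.2 (gridPt_mono (2 ^ j) k.le_succ)
  rw [secDiff, coe_gridPt_two_pow_midpoint hk, min_self, min_eq_right (by linarith),
    min_eq_left (by linarith), coe_gridPt hk.le, coe_gridPt hk]
  push_cast
  ring

end Schauder

section SchauderLaw

variable {μ W : Measure PathSpace} {K : unitInterval → unitInterval → ℝ}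

lemma IsGaussianProcess.isGaussianProcess_schauderCoef (hμ : IsGaussianProcess μ K) :
    ProbabilityTheory.IsGaussianProcess (fun o (ω : PathSpace) => schauderCoef ω.1 o) μ := by
  refine hμ.isGaussianProcess_eval.of_isGaussianProcess fun o => ?_
  rcases o with _ | ⟨j, k⟩
  · exact ⟨{1}, .proj ⟨1, by simp⟩, fun ω => rfl⟩
  · classical
    let l := gridPt (2 ^ j) k
    let r := gridPt (2 ^ j) (k + 1)
    let m := gridPt (2 ^ (j + 1)) (2 * k + 1)
    exact ⟨{l, r, m}, .proj ⟨m, by simp⟩ - (2⁻¹ : ℝ) • (.proj ⟨l, by simp⟩ + .proj ⟨r, by simp⟩),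
      fun ω => by simp [schauderCoef, secDiff, l, r, m]; ring⟩

lemma IsGaussianProcess.integral_eval (hμ : IsGaussianProcess μ K) (t : unitInterval) :
    ∫ ω, ω.1 t ∂μ = 0 := by
  simpa using (hμ.hasLaw_sum ![t] ![1]).integral_eq

lemma IsWienerMeasure.memLp_eval_add (hW : IsWienerMeasure W) (s t : unitInterval) :
    MemLp (fun ω : PathSpace => ω.1 s + ω.1 t) 2 W :=
  (hW.memLp_eval s).add (hW.memLp_eval t)

lemma IsWienerMeasure.memLp_secDiff (hW : IsWienerMeasure W) (j k : ℕ) :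
    MemLp (fun ω : PathSpace => secDiff ω.1 j k) 2 W :=
  (hW.memLp_eval _).sub ((hW.memLp_eval_add _ _).mul_const 2⁻¹)

lemma IsWienerMeasure.integral_schauderCoef (hW : IsWienerMeasure W) (o : SchauderIdx) :
    ∫ ω, schauderCoef ω.1 o ∂W = 0 := by
  have := hW.1
  have hmean := IsGaussianProcess.integral_eval hW
  have hint := fun t => (hW.memLp_eval t).integrable one_le_two
  rcases o with _ | ⟨j, k⟩
  · exact hmean 1
  · simp only [schauderCoef, secDiff]
    rw [integral_sub (hint _) (((hW.memLp_eval_add _ _).integrable one_le_two).div_const 2),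
      integral_div, integral_add (hint _) (hint _), hmean, hmean, hmean]
    norm_num

lemma IsWienerMeasure.covariance_secDiff (hW : IsWienerMeasure W) {Z : PathSpace → ℝ}
    (hZ : MemLp Z 2 W) (j k : ℕ) :
    cov[Z, fun ω => secDiff ω.1 j k; W] = secDiff (fun t => cov[Z, fun ω => ω.1 t; W]) j k := by
  have := hW.1
  have hL2 := hW.memLp_eval
  have hadd : ∀ s t : unitInterval, cov[Z, fun ω => ω.1 s + ω.1 t; W] =
      cov[Z, fun ω => ω.1 s; W] + cov[Z, fun ω => ω.1 t; W] :=
    fun s t => covariance_add_right hZ (hL2 s) (hL2 t)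
  simp only [secDiff, div_eq_mul_inv]
  rw [covariance_fun_sub_right hZ (hL2 _) ((hW.memLp_eval_add _ _).mul_const 2⁻¹),
    covariance_mul_const_right, hadd]

lemma IsWienerMeasure.covariance_eval_secDiff (hW : IsWienerMeasure W) (s : unitInterval)
    (j k : ℕ) :
    cov[fun ω => ω.1 s, fun ω => secDiff ω.1 j k; W] = secDiff (fun t => min (s : ℝ) t) j k := by
  rw [hW.covariance_secDiff (hW.memLp_eval s)]
  simp only [hW.covariance_eval]

lemma IsWienerMeasure.covariance_secDiff_eval (hW : IsWienerMeasure W) {j k : ℕ}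
    (hk : k < 2 ^ j) {s : unitInterval}
    (hs : s ≤ gridPt (2 ^ j) k ∨ gridPt (2 ^ j) (k + 1) ≤ s) :
    cov[fun ω => secDiff ω.1 j k, fun ω => ω.1 s; W] = 0 := by
  rw [covariance_comm, hW.covariance_eval_secDiff, secDiff_min_eq_zero hk hs]

lemma IsWienerMeasure.covariance_secDiff_secDiff (hW : IsWienerMeasure W) {i j k l : ℕ}
    (hk : k < 2 ^ j) (hij : i ≤ j) (hne : ¬(i = j ∧ l = k)) :
    cov[fun ω => secDiff ω.1 j k, fun ω => secDiff ω.1 i l; W] = 0 := by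
  rw [hW.covariance_secDiff (hW.memLp_secDiff j k), secDiff,
    hW.covariance_secDiff_eval hk (gridPt_midpoint_le_or_le hij hne),
    hW.covariance_secDiff_eval hk (gridPt_two_pow_le_or_le hij _ _),
    hW.covariance_secDiff_eval hk (gridPt_two_pow_le_or_le hij _ _)]
  norm_num

lemma IsWienerMeasure.covariance_secDiff_self (hW : IsWienerMeasure W) {j k : ℕ}
    (hk : k < 2 ^ j) :
    cov[fun ω => secDiff ω.1 j k, fun ω => secDiff ω.1 j k; W] = (2 ^ j)⁻¹ / 4 := by
  rw [hW.covariance_secDiff (hW.memLp_secDiff j k), secDiff,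
    hW.covariance_secDiff_eval hk (.inl le_rfl), hW.covariance_secDiff_eval hk (.inr le_rfl),
    covariance_comm, hW.covariance_eval_secDiff, secDiff_min_midpoint hk]
  ring

lemma IsWienerMeasure.variance_schauderCoef (hW : IsWienerMeasure W) (o : SchauderIdx) :
    Var[fun ω => schauderCoef ω.1 o; W] = schauderVar o := by
  rcases o with _ | ⟨j, k⟩
  · simpa [schauderCoef, schauderVar] using hW.variance_eval 1
  · rw [← covariance_self (continuous_schauderCoef _).measurable.aemeasurable]
    exact (hW.covariance_secDiff_self k.2).trans (by simp [schauderVar])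

lemma IsWienerMeasure.covariance_schauderCoef (hW : IsWienerMeasure W) {o p : SchauderIdx}
    (hop : o ≠ p) :
    cov[fun ω => schauderCoef ω.1 o, fun ω => schauderCoef ω.1 p; W] = 0 := by
  have hone : ∀ j (k : Fin (2 ^ j)), gridPt (2 ^ j) (k + 1) ≤ 1 := fun j k => le_top
  rcases o with _ | ⟨i, l⟩ <;> rcases p with _ | ⟨j, k⟩
  · exact absurd rfl hop
  · rw [covariance_comm]
    exact hW.covariance_secDiff_eval k.2 (.inr (hone j k))
  · exact hW.covariance_secDiff_eval l.2 (.inr (hone i l))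
  · have hne : ¬(i = j ∧ (l : ℕ) = k) := by
      rintro ⟨rfl, hlk⟩
      exact hop (by rw [Fin.ext hlk])
    rcases le_total i j with hij | hij
    · rw [covariance_comm]
      exact hW.covariance_secDiff_secDiff k.2 hij hne
    · exact hW.covariance_secDiff_secDiff l.2 hij fun h => hne ⟨h.1.symm, h.2.symm⟩

lemma IsWienerMeasure.hasLaw_schauderCoef (hW : IsWienerMeasure W) (o : SchauderIdx) :
    HasLaw (fun ω : PathSpace => schauderCoef ω.1 o) (gaussianReal 0 (schauderVar o)) W := by
  have hgauss := (IsGaussianProcess.isGaussianProcess_schauderCoef hW).hasGaussianLaw_eval o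
  refine ⟨(continuous_schauderCoef o).measurable.aemeasurable, ?_⟩
  rw [hgauss.map_eq_gaussianReal, hW.integral_schauderCoef, hW.variance_schauderCoef,
    Real.toNNReal_coe]

lemma IsWienerMeasure.iIndepFun_schauderCoef (hW : IsWienerMeasure W) :
    iIndepFun (fun o (ω : PathSpace) => schauderCoef ω.1 o) W :=
  iIndepFun_iff_finset.2 fun S =>
    ((IsGaussianProcess.isGaussianProcess_schauderCoef hW).hasGaussianLaw S
      ).iIndepFun_of_covariance_eq_zero
        fun _ _ hop => hW.covariance_schauderCoef (Subtype.coe_injective.ne hop)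

lemma IsWienerMeasure.measure_schauderCoef_mem (hW : IsWienerMeasure W) (S : Finset SchauderIdx)
    {A : SchauderIdx → Set ℝ} (hA : ∀ o, MeasurableSet (A o)) :
    W {ω | ∀ o ∈ S, schauderCoef ω.1 o ∈ A o} =
      ∏ o ∈ S, gaussianReal 0 (schauderVar o) (A o) := by
  have hset : {ω : PathSpace | ∀ o ∈ S, schauderCoef ω.1 o ∈ A o} =
      ⋂ o ∈ S, (fun ω : PathSpace => schauderCoef ω.1 o) ⁻¹' A o := by
    ext ω
    simp
  rw [hset, hW.iIndepFun_schauderCoef.measure_inter_preimage_eq_mul S fun o _ => hA o]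
  refine Finset.prod_congr rfl fun o _ => ?_
  rw [← (hW.hasLaw_schauderCoef o).map_eq,
    Measure.map_apply (continuous_schauderCoef o).measurable (hA o)]

end SchauderLaw

/-! ### Gaussian estimates on the line -/

section RealGaussian

variable (v : ℝ≥0)

lemma hasSubgaussianMGF_gaussianReal : HasSubgaussianMGF id v (gaussianReal 0 v) where
  integrable_exp_mul t := by simpa using integrable_exp_mul_gaussianReal (μ := 0) (v := v) t
  mgf_le t := by simp [mgf_id_gaussianReal]

lemma gaussianReal_compl_Icc_le {a : ℝ} (ha : 0 ≤ a) :
    gaussianReal 0 v (Icc (-a) a)ᶜ ≤ ENNReal.ofReal (2 * Real.exp (-a ^ 2 / (2 * v))) := by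
  have hright := (hasSubgaussianMGF_gaussianReal v).measure_ge_le ha
  have hleft := (hasSubgaussianMGF_gaussianReal v).neg.measure_ge_le ha
  have hsub : (Icc (-a) a)ᶜ ⊆ {x | a ≤ id x} ∪ {x | a ≤ (-id) x} := fun x hx => by
    by_contra h
    simp only [mem_union, mem_ofPred_eq, id_eq, Pi.neg_apply, not_or, not_le] at h
    exact hx ⟨by linarith, by linarith⟩
  rw [← ofReal_measureReal]
  refine ENNReal.ofReal_le_ofReal ?_
  have hunion := (measureReal_mono hsub).trans (measureReal_union_le (μ := gaussianReal 0 v) _ _)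
  linarith

variable {v}

lemma gaussianReal_Icc_le (hv : v ≠ 0) (z a : ℝ) :
    gaussianReal 0 v (Icc (z - a) (z + a)) ≤ ENNReal.ofReal (2 * a * (√(2 * Real.pi * v))⁻¹) := by
  rw [gaussianReal_apply _ hv]
  calc ∫⁻ x in Icc (z - a) (z + a), gaussianPDF 0 v x
      ≤ ∫⁻ _ in Icc (z - a) (z + a), ENNReal.ofReal (√(2 * Real.pi * v))⁻¹ := by
        refine lintegral_mono fun x => ENNReal.ofReal_le_ofReal ?_
        refine mul_le_of_le_one_right (by positivity) (Real.exp_le_one_iff.2 ?_)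
        exact div_nonpos_of_nonpos_of_nonneg (neg_nonpos.2 (sq_nonneg _)) (by positivity)
    _ = ENNReal.ofReal (2 * a * (√(2 * Real.pi * v))⁻¹) := by
        rw [setLIntegral_const, Real.volume_Icc, ← ENNReal.ofReal_mul (by positivity)]
        congr 1
        ring

lemma le_gaussianReal_Icc (hv : v ≠ 0) (z a : ℝ) :
    ENNReal.ofReal (2 * a * ((√(2 * Real.pi * v))⁻¹ * Real.exp (-(z ^ 2 + a ^ 2) / v))) ≤
      gaussianReal 0 v (Icc (z - a) (z + a)) := by
  rw [gaussianReal_apply _ hv]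
  have hv' : (0 : ℝ) < v := by positivity
  calc ENNReal.ofReal (2 * a * ((√(2 * Real.pi * v))⁻¹ * Real.exp (-(z ^ 2 + a ^ 2) / v)))
      = ∫⁻ _ in Icc (z - a) (z + a),
          ENNReal.ofReal ((√(2 * Real.pi * v))⁻¹ * Real.exp (-(z ^ 2 + a ^ 2) / v)) := by
        rw [setLIntegral_const, Real.volume_Icc, ← ENNReal.ofReal_mul (by positivity)]
        congr 1
        ring
    _ ≤ ∫⁻ x in Icc (z - a) (z + a), gaussianPDF 0 v x := by
        refine setLIntegral_mono' measurableSet_Icc fun x hx => ENNReal.ofReal_le_ofReal ?_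
        refine mul_le_mul_of_nonneg_left (Real.exp_le_exp.2 ?_) (by positivity)
        have hxz : (x - z) ^ 2 ≤ a ^ 2 := sq_le_sq' (by linarith [hx.1]) (by linarith [hx.2])
        have hx2 : x ^ 2 ≤ 2 * (z ^ 2 + a ^ 2) := by nlinarith [sq_nonneg (x - 2 * z)]
        rw [div_le_div_iff₀ hv' (by positivity)]
        nlinarith

end RealGaussian

/-! ### Uniform control by Schauder coefficients -/

section UniformControl

variable {f : unitInterval → ℝ} {a : ℕ → ℝ} {b : ℝ}

lemma abs_gridPt_le_of_abs_secDiff_le (hf0 : f 0 = 0) (hf1 : |f 1| ≤ b)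
    (hf : ∀ j k, k < 2 ^ j → |secDiff f j k| ≤ a j) (m : ℕ) {k : ℕ} (hk : k ≤ 2 ^ m) :
    |f (gridPt (2 ^ m) k)| ≤ b + ∑ j ∈ Finset.range m, a j := by
  induction m generalizing k with
  | zero =>
    have hk01 : k = 0 ∨ k = 1 := by omega
    rcases hk01 with rfl | rfl
    · simpa [gridPt_zero_right, hf0] using (abs_nonneg _).trans hf1
    · simpa [gridPt_self] using hf1
  | succ m ih =>
    rw [Finset.sum_range_succ]
    rw [pow_succ] at hk
    have hm := hf m 0 (by positivity)
    obtain ⟨l, rfl | rfl⟩ : ∃ l, k = 2 * l ∨ k = 2 * l + 1 := ⟨k / 2, by omega⟩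
    · rw [gridPt_two_pow_succ]
      linarith [ih (k := l) (by omega), abs_nonneg (secDiff f m 0)]
    · have hmid : f (gridPt (2 ^ (m + 1)) (2 * l + 1)) = secDiff f m l +
          (f (gridPt (2 ^ m) l) + f (gridPt (2 ^ m) (l + 1))) / 2 := by
        rw [secDiff]
        ring
      have hsd := abs_le.1 (hf m l (by omega))
      have hl := abs_le.1 (ih (k := l) (by omega))
      have hr := abs_le.1 (ih (k := l + 1) (by omega))
      rw [hmid, abs_le]
      constructor <;> linarith [hsd.1, hsd.2, hl.1, hl.2, hr.1, hr.2]

lemma tendsto_gridPt_floor (t : unitInterval) :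
    Tendsto (fun m : ℕ => gridPt (2 ^ m) ⌊(t : ℝ) * 2 ^ m⌋₊) atTop (𝓝 t) := by
  have hclamp : Continuous clampI := by
    unfold clampI
    fun_prop
  have hpow : Tendsto (fun m : ℕ => (2 : ℝ) ^ m) atTop atTop :=
    tendsto_pow_atTop_atTop_of_one_lt one_lt_two
  have hfloor := (hclamp.tendsto t).comp ((tendsto_nat_floor_mul_div_atTop t.2.1).comp hpow)
  rw [show clampI t = t from Subtype.ext (coe_clampI t.2.1 t.2.2)] at hfloor
  simpa [gridPt, Function.comp_def] using hfloor

lemma abs_le_add_tsum_of_abs_secDiff_le (hfc : Continuous f) (hf0 : f 0 = 0) (hf1 : |f 1| ≤ b)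
    (ha : Summable a) (hf : ∀ j k, k < 2 ^ j → |secDiff f j k| ≤ a j) (t : unitInterval) :
    |f t| ≤ b + ∑' j, a j := by
  refine le_of_tendsto ((hfc.abs.tendsto t).comp (tendsto_gridPt_floor t)) (.of_forall fun m => ?_)
  have hfloor : ⌊(t : ℝ) * 2 ^ m⌋₊ ≤ 2 ^ m := by
    refine Nat.floor_le_of_le ?_
    push_cast
    exact mul_le_of_le_one_left (by positivity) t.2.2
  have ha0 : ∀ j, 0 ≤ a j := fun j => (abs_nonneg _).trans (hf j 0 (by positivity))
  exact (abs_gridPt_le_of_abs_secDiff_le hf0 hf1 hf m hfloor).trans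
    (add_le_add_right (ha.sum_le_tsum _ fun j _ => ha0 j) b)

end UniformControl

/-! ### Wiener measure of balls from below -/

section HighGenerations

/-- The index of the affine Faber-Schauder function together with those of the hat functions of
generation less than `J`. -/
def lowIdx (J : ℕ) : Finset SchauderIdx :=
  Finset.insertNone ((Finset.range J).sigma fun _ => Finset.univ)

/-- The generation of a Faber-Schauder function, with value `0` at the affine one. -/
def schauderGen : SchauderIdx → ℕ
  | none => 0
  | some ⟨j, _⟩ => j

lemma none_mem_lowIdx (J : ℕ) : none ∈ lowIdx J := by simp [lowIdx]

lemma some_mem_lowIdx {J : ℕ} {p : Σ j : ℕ, Fin (2 ^ j)} : some p ∈ lowIdx J ↔ p.1 < J := by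
  simp [lowIdx]

lemma card_lowIdx (J : ℕ) : (lowIdx J).card = 2 ^ J := by
  rw [lowIdx, Finset.card_insertNone, Finset.card_sigma]
  simp only [Finset.card_univ, Fintype.card_fin, Nat.geomSum_eq le_rfl]
  have := Nat.one_le_two_pow (n := J)
  omega

lemma measure_forall_mem_and_eq_mul_of_iIndepFun {Ω ι E : Type*} [MeasurableSpace Ω]
    [mE : MeasurableSpace E] [Countable ι] {μ : Measure Ω} {X : ι → Ω → E} (hX : iIndepFun X μ)
    (hm : ∀ i, Measurable (X i)) (S : Set ι) {A B : ι → Set E} (hA : ∀ i, MeasurableSet (A i))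
    (hB : ∀ i, MeasurableSet (B i)) :
    μ {ω | (∀ i ∈ S, X i ω ∈ A i) ∧ ∀ i ∉ S, X i ω ∈ B i} =
      μ {ω | ∀ i ∈ S, X i ω ∈ A i} * μ {ω | ∀ i ∉ S, X i ω ∈ B i} := by
  have hindep := indep_iSup_of_disjoint (fun i => (hm i).comap_le) hX.iIndep
    (disjoint_compl_right (a := S))
  have hmeas : ∀ (T : Set ι) {A : ι → Set E}, (∀ i, MeasurableSet (A i)) →
      MeasurableSet[⨆ i ∈ T, MeasurableSpace.comap (X i) mE] {ω | ∀ i ∈ T, X i ω ∈ A i} := by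
    intro T A hA
    simp only [ofPred_forall]
    refine MeasurableSet.biInter T.to_countable fun i hi => ?_
    exact (le_iSup₂_of_le i hi le_rfl : _ ≤ ⨆ i ∈ T, MeasurableSpace.comap (X i) mE) _
      ⟨A i, hA i, rfl⟩
  exact (Indep_iff ..).1 hindep _ _ (hmeas S hA) (hmeas Sᶜ hB)

lemma summable_two_pow_mul_exp_neg {a : ℝ} (ha : 1 < a) :
    Summable fun j : ℕ => (2 : ℝ) ^ j * (2 * Real.exp (-(2 * a ^ j))) := by
  have hratio : (2 : ℝ) / Real.exp 2 < 1 := by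
    rw [div_lt_one (by positivity)]
    linarith [Real.add_one_le_exp (2 : ℝ)]
  have hgeom := (summable_geometric_of_lt_one (by positivity) hratio).mul_left 2
  refine hgeom.of_norm_bounded_eventually_nat ?_
  filter_upwards [(tendsto_pow_const_div_const_pow_of_one_lt 1 ha).eventually_lt_const one_pos]
    with n hn
  rw [pow_one, div_lt_one (by positivity)] at hn
  rw [Real.norm_of_nonneg (by positivity), div_pow, ← Real.exp_nat_mul, mul_left_comm,
    div_eq_mul_inv, ← Real.exp_neg]
  have hexp : Real.exp (-(2 * a ^ n)) ≤ Real.exp (-(n * 2)) := Real.exp_le_exp.2 (by linarith)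
  gcongr

lemma tsum_gaussianReal_schauderVar_compl_Icc_ne_top {ρ : ℝ} (hρ0 : 0 ≤ ρ) (hρ : 1 < 2 * ρ ^ 2) :
    ∑' p : Σ j : ℕ, Fin (2 ^ j),
      gaussianReal 0 (schauderVar (some p)) (Icc (-ρ ^ p.1) (ρ ^ p.1))ᶜ ≠ ∞ := by
  have hle : ∀ p : Σ j : ℕ, Fin (2 ^ j),
      gaussianReal 0 (schauderVar (some p)) (Icc (-ρ ^ p.1) (ρ ^ p.1))ᶜ ≤
        ENNReal.ofReal (2 * Real.exp (-(2 * (2 * ρ ^ 2) ^ p.1))) := fun p => by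
    refine (gaussianReal_compl_Icc_le _ (pow_nonneg hρ0 _)).trans_eq ?_
    congr 3
    simp only [schauderVar]
    push_cast
    rw [mul_pow, ← pow_mul, ← pow_mul, mul_comm p.1]
    field_simp
    norm_num
  refine ne_top_of_le_ne_top (summable_two_pow_mul_exp_neg hρ).tsum_ofReal_ne_top
    ((ENNReal.tsum_le_tsum hle).trans_eq ?_)
  rw [ENNReal.tsum_sigma']
  refine tsum_congr fun j => ?_
  simp only [tsum_fintype]
  rw [Finset.sum_const, Finset.card_univ, Fintype.card_fin, nsmul_eq_mul,
    ENNReal.ofReal_mul (by positivity : (0 : ℝ) ≤ 2 ^ j)]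
  simp [ENNReal.ofReal_pow]

variable {W : Measure PathSpace}

lemma IsWienerMeasure.eventually_half_le_measure_schauderCoef (hW : IsWienerMeasure W) {ρ : ℝ}
    (hρ0 : 0 ≤ ρ) (hρ : 1 < 2 * ρ ^ 2) :
    ∀ᶠ J in atTop, 1 / 2 ≤ W {ω | ∀ o ∉ lowIdx J,
      schauderCoef ω.1 o ∈ Icc (-ρ ^ schauderGen o) (ρ ^ schauderGen o)} := by
  have := hW.1
  let bad : (Σ j : ℕ, Fin (2 ^ j)) → Set PathSpace := fun p =>
    {ω | schauderCoef ω.1 (some p) ∈ (Icc (-ρ ^ p.1) (ρ ^ p.1))ᶜ}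
  have hbad : ∀ p, W (bad p) =
      gaussianReal 0 (schauderVar (some p)) (Icc (-ρ ^ p.1) (ρ ^ p.1))ᶜ := fun p =>
    (hW.hasLaw_schauderCoef (some p)).measure_eq measurableSet_Icc.compl
  let low : ℕ → Finset (Σ j : ℕ, Fin (2 ^ j)) := fun J =>
    (Finset.range J).sigma fun _ => Finset.univ
  have hlow : Tendsto low atTop atTop :=
    tendsto_atTop_finset_of_monotone
      (fun _ _ h => Finset.sigma_mono (Finset.range_mono h) fun _ => le_rfl)
      fun p => ⟨p.1 + 1, by simp [low]⟩
  have htail := (ENNReal.tendsto_tsum_compl_atTop_zero (f := fun p => W (bad p)) (by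
    simpa only [hbad] using tsum_gaussianReal_schauderVar_compl_Icc_ne_top hρ0 hρ)).comp hlow
  filter_upwards [htail.eventually_le_const (show (0 : ℝ≥0∞) < 1 / 2 by simp)] with J hJ
  have hcompl : {ω : PathSpace | ∀ o ∉ lowIdx J,
      schauderCoef ω.1 o ∈ Icc (-ρ ^ schauderGen o) (ρ ^ schauderGen o)}ᶜ ⊆
      ⋃ p : {p // p ∉ low J}, bad p := fun ω hω => by
    simp only [mem_compl_iff, mem_ofPred_eq, not_forall] at hω
    obtain ⟨_ | p, hp, hωp⟩ := hω
    · exact absurd (none_mem_lowIdx J) hp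
    · exact mem_iUnion.2 ⟨⟨p, fun h => hp (some_mem_lowIdx.2 (by simpa [low] using h))⟩, hωp⟩
  have hone := measure_univ_le_add_compl (μ := W) {ω : PathSpace | ∀ o ∉ lowIdx J,
      schauderCoef ω.1 o ∈ Icc (-ρ ^ schauderGen o) (ρ ^ schauderGen o)}
  rw [measure_univ] at hone
  rw [← ENNReal.sub_half ENNReal.one_ne_top, tsub_le_iff_right]
  exact hone.trans (by gcongr; exact (measure_mono hcompl).trans ((measure_iUnion_le _).trans hJ))

lemma IsWienerMeasure.eventually_half_mul_prod_le_measure_schauderCoef (hW : IsWienerMeasure W)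
    {ρ : ℝ} (hρ0 : 0 ≤ ρ) (hρ : 1 < 2 * ρ ^ 2) :
    ∀ᶠ J in atTop, ∀ A : SchauderIdx → Set ℝ, (∀ o, MeasurableSet (A o)) →
      1 / 2 * ∏ o ∈ lowIdx J, gaussianReal 0 (schauderVar o) (A o) ≤
        W {ω | (∀ o ∈ lowIdx J, schauderCoef ω.1 o ∈ A o) ∧ ∀ o ∉ lowIdx J,
          schauderCoef ω.1 o ∈ Icc (-ρ ^ schauderGen o) (ρ ^ schauderGen o)} := by
  filter_upwards [hW.eventually_half_le_measure_schauderCoef hρ0 hρ] with J hJ A hA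
  have hindep := measure_forall_mem_and_eq_mul_of_iIndepFun hW.iIndepFun_schauderCoef
    (fun o => (continuous_schauderCoef o).measurable) (lowIdx J) hA
    (B := fun o => Icc (-ρ ^ schauderGen o) (ρ ^ schauderGen o)) fun _ => measurableSet_Icc
  simp only [Finset.mem_coe] at hindep
  rw [hindep, hW.measure_schauderCoef_mem _ hA, mul_comm]
  gcongr

end HighGenerations

/-- The paths which are `β`-Hölder with constant `K`. -/
def holderBall (β K : ℝ) : Set PathSpace :=
  {ω | ∀ x y : unitInterval, |ω.1 x - ω.1 y| ≤ K * |(x : ℝ) - y| ^ β}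

section HolderBall

variable {β K : ℝ} {ω : PathSpace}

lemma exists_mem_holderBall_of_mem_holderSet (h : ω ∈ holderSet β) :
    ∃ K, 0 ≤ K ∧ ω ∈ holderBall β K := by
  obtain ⟨C, hC⟩ := h
  refine ⟨|C|, abs_nonneg C, fun x y => (hC x y).trans ?_⟩
  gcongr
  exact le_abs_self C

lemma abs_sub_le_of_mem_holderBall (hβ : 0 ≤ β) (hK : 0 ≤ K) (h : ω ∈ holderBall β K)
    {x y : unitInterval} {d : ℝ} (hd : |(x : ℝ) - y| ≤ d) : |ω.1 x - ω.1 y| ≤ K * d ^ β :=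
  (h x y).trans (by gcongr)

lemma abs_secDiff_le_of_mem_holderBall (hβ : 0 ≤ β) (hK : 0 ≤ K) (h : ω ∈ holderBall β K)
    {j k : ℕ} (hk : k < 2 ^ j) : |secDiff ω.1 j k| ≤ K * ((2 : ℝ) ^ (-β)) ^ j := by
  have hp : (0 : ℝ) < (2 ^ j)⁻¹ := by positivity
  have hle : ((2 : ℝ) ^ (-β)) ^ j = ((2 : ℝ) ^ j)⁻¹ ^ β := by
    rw [Real.rpow_neg zero_le_two, inv_pow, Real.rpow_pow_comm zero_le_two,
      Real.inv_rpow (by positivity)]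
  have hlen : (gridPt (2 ^ j) (k + 1) : ℝ) - gridPt (2 ^ j) k = (2 ^ j)⁻¹ := by
    rw [coe_gridPt hk.le, coe_gridPt hk]
    push_cast
    ring
  have hmid := coe_gridPt_two_pow_midpoint hk
  have hleft := abs_le.1 <| abs_sub_le_of_mem_holderBall hβ hK h (d := (2 ^ j)⁻¹)
    (x := gridPt (2 ^ (j + 1)) (2 * k + 1)) (y := gridPt (2 ^ j) k)
    (abs_le.2 ⟨by linarith, by linarith⟩)
  have hright := abs_le.1 <| abs_sub_le_of_mem_holderBall hβ hK h (d := (2 ^ j)⁻¹)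
    (x := gridPt (2 ^ (j + 1)) (2 * k + 1)) (y := gridPt (2 ^ j) (k + 1))
    (abs_le.2 ⟨by linarith, by linarith⟩)
  rw [hle, abs_le, secDiff]
  constructor <;> linarith [hleft.1, hleft.2, hright.1, hright.2]

lemma sq_schauderCoef_div_le_of_mem_holderBall (hβ : 0 ≤ β) (hβ2 : β ≤ 1 / 2) (hK : 0 ≤ K)
    (h : ω ∈ holderBall β K) {J : ℕ} {o : SchauderIdx} (ho : o ∈ lowIdx J) :
    schauderCoef ω.1 o ^ 2 / schauderVar o ≤ 4 * K ^ 2 * ((2 : ℝ) ^ J) ^ (1 - 2 * β) := by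
  have hone : ∀ j : ℕ, (1 : ℝ) ≤ 2 ^ j := fun j => one_le_pow₀ one_le_two
  rcases o with _ | ⟨j, k⟩
  · have hend := abs_sub_le_of_mem_holderBall hβ hK h (x := 1) (y := 0) (d := 1) (by simp)
    rw [ω.2, sub_zero, Real.one_rpow, mul_one] at hend
    have hsq : ω.1 1 ^ 2 ≤ K ^ 2 := sq_le_sq' (abs_le.1 hend).1 (abs_le.1 hend).2
    have hpow := Real.one_le_rpow (hone J) (show 0 ≤ 1 - 2 * β by linarith)
    simp only [schauderCoef, schauderVar, NNReal.coe_one, div_one]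
    nlinarith [sq_nonneg K]
  · have hsd := abs_le.1 (abs_secDiff_le_of_mem_holderBall hβ hK h k.2)
    have hsq : secDiff ω.1 j k ^ 2 ≤ (K * ((2 : ℝ) ^ (-β)) ^ j) ^ 2 := sq_le_sq' hsd.1 hsd.2
    have hpow : ((2 : ℝ) ^ j) ^ (1 - 2 * β) = 2 ^ j * (((2 : ℝ) ^ (-β)) ^ j) ^ 2 := by
      rw [Real.rpow_pow_comm zero_le_two, ← Real.rpow_mul_natCast (by positivity), sub_eq_add_neg,
        Real.rpow_add (by positivity), Real.rpow_one]
      congr 2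
      push_cast
      ring
    simp only [schauderCoef, schauderVar]
    push_cast
    calc secDiff ω.1 j k ^ 2 / ((2 ^ j)⁻¹ / 4) = 4 * 2 ^ j * secDiff ω.1 j k ^ 2 := by field_simp
      _ ≤ 4 * 2 ^ j * (K * ((2 : ℝ) ^ (-β)) ^ j) ^ 2 := by gcongr
      _ = 4 * K ^ 2 * ((2 : ℝ) ^ j) ^ (1 - 2 * β) := by
        rw [hpow]
        ring
      _ ≤ 4 * K ^ 2 * ((2 : ℝ) ^ J) ^ (1 - 2 * β) := by
        gcongr
        · linarith
        · exact one_le_two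
        · exact (some_mem_lowIdx.1 ho).le

lemma schauderVar_le_one (o : SchauderIdx) : schauderVar o ≤ 1 := by
  rcases o with _ | ⟨j, _⟩
  · rfl
  · have : ((2 : ℝ≥0) ^ j)⁻¹ ≤ 1 := inv_le_one_of_one_le₀ (one_le_pow₀ one_le_two)
    exact (div_le_self zero_le (by norm_num)).trans this

lemma inv_schauderVar_le {J : ℕ} {o : SchauderIdx} (ho : o ∈ lowIdx J) :
    (schauderVar o : ℝ)⁻¹ ≤ 4 * 2 ^ J := by
  rcases o with _ | ⟨j, _⟩
  · have : (1 : ℝ) ≤ 2 ^ J := one_le_pow₀ one_le_two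
    simp only [schauderVar, NNReal.coe_one, inv_one]
    linarith
  · simp only [schauderVar]
    push_cast
    rw [inv_div, div_inv_eq_mul]
    gcongr
    · exact one_le_two
    · exact (some_mem_lowIdx.1 ho).le

end HolderBall

section BallLowerBound

lemma exp_le_gaussianReal_Icc_inv_sq {v : ℝ≥0} {x s M z : ℝ} (hx : 1 ≤ x) (hs : 0 < s)
    (hv : v ≠ 0) (hv1 : v ≤ 1) (hvx : (v : ℝ)⁻¹ ≤ 4 * x) (hz : z ^ 2 / v ≤ M * x ^ s) :
    ENNReal.ofReal (Real.exp (-((M + 5 + 2 / s) * x ^ s))) ≤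
      gaussianReal 0 v (Icc (z - (x ^ 2)⁻¹) (z + (x ^ 2)⁻¹)) := by
  have hx0 : 0 < x := by linarith
  have : (0 : ℝ) < v := by positivity
  have hxs : 1 ≤ x ^ s := Real.one_le_rpow hx hs.le
  have hsqrt : 1 / 4 ≤ (√(2 * Real.pi * v))⁻¹ := by
    rw [one_div]
    refine inv_anti₀ (by positivity) ((Real.sqrt_le_left (by norm_num)).2 ?_)
    have : (v : ℝ) ≤ 1 := by exact_mod_cast hv1
    nlinarith [Real.pi_le_four, Real.pi_pos]
  have hwidth : ((x ^ 2)⁻¹) ^ 2 / v ≤ 4 := by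
    have hinv : ((x ^ 2)⁻¹) ^ 2 ≤ x⁻¹ := by
      rw [inv_pow, ← pow_mul]
      exact inv_anti₀ hx0 (le_self_pow₀ hx (by norm_num))
    calc ((x ^ 2)⁻¹) ^ 2 / v ≤ x⁻¹ * (4 * x) := by
          rw [div_eq_mul_inv]
          gcongr
      _ = 4 := by field_simp
  have hpoly : Real.exp (-(2 / s * x ^ s + 1)) ≤ (x ^ 2)⁻¹ / 2 := by
    have hlog : 2 / s * x ^ s = 2 * (x ^ s / s) := by ring
    rw [← Real.le_log_iff_exp_le (by positivity), Real.log_div (by positivity) two_ne_zero,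
      Real.log_inv, Real.log_pow]
    push_cast
    linarith [Real.log_le_rpow_div hx0.le hs, Real.log_two_lt_d9]
  refine le_trans (ENNReal.ofReal_le_ofReal ?_) (le_gaussianReal_Icc hv _ _)
  calc Real.exp (-((M + 5 + 2 / s) * x ^ s))
      ≤ Real.exp (-(2 / s * x ^ s + 1)) * Real.exp (-(M * x ^ s + 4)) := by
        rw [← Real.exp_add]
        exact Real.exp_le_exp.2 (by nlinarith)
    _ ≤ (x ^ 2)⁻¹ / 2 * Real.exp (-(z ^ 2 + ((x ^ 2)⁻¹) ^ 2) / v) := by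
        gcongr
        rw [neg_div, add_div]
        linarith
    _ = 2 * (x ^ 2)⁻¹ * (1 / 4 * Real.exp (-(z ^ 2 + ((x ^ 2)⁻¹) ^ 2) / v)) := by ring
    _ ≤ _ := by gcongr

lemma hasSum_ite_lt_mul_pow {ρ : ℝ} (hρ0 : 0 ≤ ρ) (hρ1 : ρ < 1) (J : ℕ) (δ C : ℝ) :
    HasSum (fun j => if j < J then δ else C * ρ ^ j) (J * δ + C * ρ ^ J / (1 - ρ)) := by
  rw [← hasSum_nat_add_iff' J, Finset.sum_congr rfl fun j hj => if_pos (Finset.mem_range.1 hj)]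
  simpa [pow_add, div_eq_mul_inv, mul_comm, mul_left_comm, mul_assoc] using
    (hasSum_geometric_of_lt_one hρ0 hρ1).mul_left (C * ρ ^ J)

lemma abs_sub_le_of_schauderCoef {ω ωb : PathSpace} {ρ δ K : ℝ} (hρ0 : 0 ≤ ρ) (hρ1 : ρ < 1) {J : ℕ}
    (hlow : ∀ o ∈ lowIdx J, schauderCoef ω.1 o ∈ Icc (schauderCoef ωb.1 o - δ)
      (schauderCoef ωb.1 o + δ))
    (hhigh : ∀ o ∉ lowIdx J, schauderCoef ω.1 o ∈ Icc (-ρ ^ schauderGen o) (ρ ^ schauderGen o))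
    (hωb : ∀ j k, k < 2 ^ j → |secDiff ωb.1 j k| ≤ K * ρ ^ j) (t : unitInterval) :
    |ω.1 t - ωb.1 t| ≤ (J + 1) * δ + (1 + K) * ρ ^ J / (1 - ρ) := by
  have hsum := hasSum_ite_lt_mul_pow hρ0 hρ1 J δ (1 + K)
  have hone : |ω.1 1 - ωb.1 1| ≤ δ := by
    have hmem := hlow none (none_mem_lowIdx J)
    simp only [schauderCoef, mem_Icc] at hmem
    exact abs_le.2 ⟨by linarith, by linarith⟩
  have hle := abs_le_add_tsum_of_abs_secDiff_le (f := ω.1 - ωb.1) (b := δ)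
    (a := fun j => if j < J then δ else (1 + K) * ρ ^ j) (map_continuous (ω.1 - ωb.1))
    (by simp [ω.2, ωb.2]) hone hsum.summable (fun j k hk => ?_) t
  · rw [hsum.tsum_eq] at hle
    exact hle.trans_eq (by ring)
  · rw [secDiff_sub, abs_le]
    split_ifs with hj
    · have hsd := hlow (some ⟨j, k, hk⟩) (some_mem_lowIdx.2 hj)
      simp only [schauderCoef, mem_Icc] at hsd
      constructor <;> linarith [hsd.1, hsd.2]
    · have hsd := hhigh (some ⟨j, k, hk⟩) (mt some_mem_lowIdx.1 hj)
      have hsdb := abs_le.1 (hωb j k hk)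
      simp only [schauderCoef, schauderGen, mem_Icc] at hsd
      constructor <;> linarith [hsd.1, hsd.2, hsdb.1, hsdb.2]

variable {W : Measure PathSpace} {β K : ℝ} {ωb : PathSpace}

lemma IsWienerMeasure.eventually_half_mul_prod_le_measure_ball (hW : IsWienerMeasure W)
    (hβ : 0 < β) (hβ2 : β < 1 / 2) (hK : 0 ≤ K) (hωb : ωb ∈ holderBall β K) :
    ∀ᶠ J : ℕ in atTop, 1 / 2 * ∏ o ∈ lowIdx J, gaussianReal 0 (schauderVar o)
      (Icc (schauderCoef ωb.1 o - ((2 ^ J) ^ 2)⁻¹) (schauderCoef ωb.1 o + ((2 ^ J) ^ 2)⁻¹)) ≤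
        W (ball ωb ((2 + (1 + K) / (1 - 2 ^ (-β))) * ((2 : ℝ) ^ J) ^ (-β))) := by
  have hρ1 : (2 : ℝ) ^ (-β) < 1 := Real.rpow_lt_one_of_one_lt_of_neg one_lt_two (by linarith)
  have hρ2 : 1 < 2 * ((2 : ℝ) ^ (-β)) ^ 2 := by
    have hpow : 2 * ((2 : ℝ) ^ (-β)) ^ 2 = 2 ^ (1 - 2 * β) := by
      rw [← Real.rpow_mul_natCast zero_le_two,
        ← Real.rpow_one_add' zero_le_two (by norm_num; linarith)]
      congr 1
      push_cast
      ring
    rw [hpow]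
    exact Real.one_lt_rpow one_lt_two (by linarith)
  filter_upwards [hW.eventually_half_mul_prod_le_measure_schauderCoef (by positivity) hρ2] with J hJ
  refine (hJ _ fun o => measurableSet_Icc).trans (measure_mono fun ω ⟨hlow, hhigh⟩ => ?_)
  have hdist := abs_sub_le_of_schauderCoef (by positivity) hρ1 hlow hhigh
    fun j k hk => abs_secDiff_le_of_mem_holderBall hβ.le hK hωb hk
  rw [Real.rpow_pow_comm zero_le_two] at hdist
  have hx : (1 : ℝ) ≤ 2 ^ J := one_le_pow₀ one_le_two
  have hδ : (J + 1 : ℝ) * ((2 ^ J) ^ 2)⁻¹ ≤ ((2 : ℝ) ^ J) ^ (-β) := by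
    calc (J + 1 : ℝ) * ((2 ^ J) ^ 2)⁻¹ ≤ 2 ^ J * ((2 ^ J) ^ 2)⁻¹ := by
          gcongr
          exact_mod_cast J.lt_two_pow_self
      _ = ((2 : ℝ) ^ J) ^ (-1 : ℝ) := by
        rw [Real.rpow_neg_one]
        field_simp
      _ ≤ _ := Real.rpow_le_rpow_of_exponent_le hx (by linarith)
  have hpos : 0 < ((2 : ℝ) ^ J) ^ (-β) := by positivity
  have hradius : 0 < (2 + (1 + K) / (1 - 2 ^ (-β))) * ((2 : ℝ) ^ J) ^ (-β) := by
    have := sub_pos.2 hρ1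
    positivity
  rw [mem_ball, Subtype.dist_eq, ContinuousMap.dist_lt_iff hradius]
  refine fun t => (hdist t).trans_lt ?_
  rw [mul_div_right_comm, add_mul]
  linarith

lemma IsWienerMeasure.eventually_exp_le_measure_ball (hW : IsWienerMeasure W)
    (hβ : 0 < β) (hβ2 : β < 1 / 2) (hK : 0 ≤ K) (hωb : ωb ∈ holderBall β K) :
    ∀ᶠ J : ℕ in atTop,
      ENNReal.ofReal (Real.exp (-((4 * K ^ 2 + 6 + 2 / (1 - 2 * β)) *
        ((2 : ℝ) ^ J) ^ (2 - 2 * β)))) ≤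
        W (ball ωb ((2 + (1 + K) / (1 - 2 ^ (-β))) * ((2 : ℝ) ^ J) ^ (-β))) := by
  have hs : 0 < 1 - 2 * β := by linarith
  filter_upwards [hW.eventually_half_mul_prod_le_measure_ball hβ hβ2 hK hωb] with J hJ
  refine le_trans ?_ hJ
  have hx : (1 : ℝ) ≤ 2 ^ J := one_le_pow₀ one_le_two
  have hfactor := fun o (ho : o ∈ lowIdx J) =>
    exp_le_gaussianReal_Icc_inv_sq hx hs (schauderVar_ne_zero o) (schauderVar_le_one o)
      (inv_schauderVar_le ho)
      (sq_schauderCoef_div_le_of_mem_holderBall hβ.le hβ2.le hK hωb ho)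
  refine le_trans ?_ (mul_le_mul_right (Finset.prod_le_prod' hfactor) _)
  have hhalf : ENNReal.ofReal (Real.exp (-1)) ≤ 1 / 2 := by
    rw [← ENNReal.ofReal_one, ← ENNReal.ofReal_ofNat 2, ← ENNReal.ofReal_div_of_pos two_pos]
    refine ENNReal.ofReal_le_ofReal ?_
    linarith [Real.exp_neg_one_lt_d9]
  rw [Finset.prod_const, card_lowIdx, ← ENNReal.ofReal_pow (Real.exp_pos _).le, ← Real.exp_nat_mul]
  refine le_trans ?_ (mul_le_mul_left hhalf _)
  rw [← ENNReal.ofReal_mul (Real.exp_pos _).le, ← Real.exp_add]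
  refine ENNReal.ofReal_le_ofReal (Real.exp_le_exp.2 ?_)
  have hsplit : ((2 : ℝ) ^ J) ^ (2 - 2 * β) = 2 ^ J * ((2 : ℝ) ^ J) ^ (1 - 2 * β) := by
    rw [← Real.rpow_one_add' (by positivity) (by linarith)]
    congr 1
    ring
  have hpow : 1 ≤ ((2 : ℝ) ^ J) ^ (2 - 2 * β) := Real.one_le_rpow hx (by linarith)
  push_cast
  linear_combination hpow - (4 * K ^ 2 + 5 + 2 / (1 - 2 * β)) * hsplit

end BallLowerBound

/-! ### Local orders from bounds on the measure of balls -/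

section LocalOrder

variable {μ W : Measure PathSpace} {ω : PathSpace} {C p : ℝ}

lemma tendsto_neg_log_nhdsGT_zero : Tendsto (fun ε : ℝ => -Real.log ε) (𝓝[>] 0) atTop :=
  tendsto_neg_atBot_atTop.comp Real.tendsto_log_nhdsGT_zero

lemma tendsto_log_mul_rpow_div_neg_log (hC : 0 < C) (p : ℝ) :
    Tendsto (fun ε : ℝ => ((Real.log (C * ε ^ (-p)) / (-Real.log ε) : ℝ) : EReal)) (𝓝[>] 0)
      (𝓝 (p : EReal)) := by
  have hlim : Tendsto (fun ε : ℝ => Real.log C / (-Real.log ε) + p) (𝓝[>] 0) (𝓝 (0 + p)) :=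
    (tendsto_neg_log_nhdsGT_zero.const_div_atTop _).add_const p
  rw [zero_add] at hlim
  refine (continuous_coe_real_ereal.tendsto p).comp (hlim.congr' ?_)
  filter_upwards [Ioo_mem_nhdsGT (zero_lt_one' ℝ)] with ε hε
  have hlog := Real.log_neg hε.1 hε.2
  rw [Real.log_mul hC.ne' (Real.rpow_pos_of_pos hε.1 _).ne', Real.log_rpow hε.1]
  field_simp [hlog.ne]
  ring

lemma upperLocOrd_le [IsProbabilityMeasure μ] (hC : 0 < C) (hp : 0 < p)
    (h : ∀ᶠ ε in 𝓝[>] (0 : ℝ), ENNReal.ofReal (Real.exp (-(C * ε ^ (-p)))) ≤ μ (ball ω ε)) :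
    upperLocOrd μ ω ≤ (p : EReal) := by
  rw [upperLocOrd, ← (tendsto_log_mul_rpow_div_neg_log hC p).limsup_eq]
  refine limsup_le_limsup ?_
  have hlarge : ∀ᶠ ε in 𝓝[>] (0 : ℝ), 1 ≤ C * ε ^ (-p) :=
    ((tendsto_rpow_neg_nhdsGT_zero (neg_neg_of_pos hp)).const_mul_atTop hC).eventually_ge_atTop 1
  filter_upwards [h, hlarge, Ioo_mem_nhdsGT (zero_lt_one' ℝ)] with ε hε hlarge hε01
  have hlog := Real.log_neg hε01.1 hε01.2
  refine EReal.coe_le_coe_iff.2 (div_le_div_of_nonneg_right ?_ (by linarith))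
  have hexp : Real.exp (-(C * ε ^ (-p))) ≤ (μ (ball ω ε)).toReal :=
    (ENNReal.ofReal_le_iff_le_toReal (measure_ne_top _ _)).1 hε
  have hpos := (Real.exp_pos _).trans_le hexp
  have hle : -Real.log (μ (ball ω ε)).toReal ≤ C * ε ^ (-p) := by
    linarith [(Real.le_log_iff_exp_le hpos).2 hexp]
  rcases (neg_nonneg.2 (Real.log_nonpos hpos.le measureReal_le_one)).eq_or_lt with h0 | h0
  · rw [← h0, Real.log_zero]
    exact Real.log_nonneg hlarge
  · exact Real.log_le_log h0 hle

lemma le_lowerLocOrd [IsFiniteMeasure μ] [μ.IsOpenPosMeasure] (hC : 0 < C)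
    (h : ∀ᶠ ε in 𝓝[>] (0 : ℝ), μ (ball ω ε) ≤ ENNReal.ofReal (Real.exp (-(C * ε ^ (-p))))) :
    (p : EReal) ≤ lowerLocOrd μ ω := by
  rw [lowerLocOrd, ← (tendsto_log_mul_rpow_div_neg_log hC p).liminf_eq]
  refine liminf_le_liminf ?_
  filter_upwards [h, Ioo_mem_nhdsGT (zero_lt_one' ℝ)] with ε hε hε01
  have hlog := Real.log_neg hε01.1 hε01.2
  refine EReal.coe_le_coe_iff.2 (div_le_div_of_nonneg_right ?_ (by linarith))
  have hpos := ENNReal.toReal_pos (measure_ball_pos μ ω hε01.1).ne' (measure_ne_top _ _)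
  have hle := (Real.log_le_iff_le_exp hpos).2 (ENNReal.toReal_le_of_le_ofReal (by positivity) hε)
  exact Real.log_le_log (mul_pos hC (Real.rpow_pos_of_pos hε01.1 _)) (by linarith)

lemma lowerLocOrd_le_upperLocOrd (μ : Measure PathSpace) (ω : PathSpace) :
    lowerLocOrd μ ω ≤ upperLocOrd μ ω := liminf_le_limsup

lemma exists_two_pow_le_two_mul {y : ℝ} (hy : 1 ≤ y) :
    ∃ n : ℕ, y ≤ 2 ^ n ∧ (2 : ℝ) ^ n ≤ 2 * y := by
  obtain ⟨n, hn, hn'⟩ := exists_nat_pow_near hy one_lt_two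
  exact ⟨n + 1, hn'.le, by linarith [pow_succ (2 : ℝ) n]⟩

lemma upperLocOrd_le_of_dyadic [IsProbabilityMeasure μ] {C₁ C₂ β : ℝ} (hC₁ : 0 < C₁)
    (hC₂ : 0 < C₂) (hβ : 0 < β) (hp : 0 < p)
    (h : ∀ᶠ J : ℕ in atTop, ENNReal.ofReal (Real.exp (-(C₂ * ((2 : ℝ) ^ J) ^ p))) ≤
      μ (ball ω (C₁ * ((2 : ℝ) ^ J) ^ (-β)))) :
    upperLocOrd μ ω ≤ ((p / β : ℝ) : EReal) := by
  obtain ⟨J₀, hJ₀⟩ := eventually_atTop.1 h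
  refine upperLocOrd_le (C := C₂ * (2 * C₁ ^ (1 / β)) ^ p) (by positivity) (div_pos hp hβ) ?_
  have hscale : Tendsto (fun ε : ℝ => (C₁ * ε⁻¹) ^ (1 / β)) (𝓝[>] 0) atTop :=
    (tendsto_rpow_atTop (by positivity)).comp (tendsto_inv_nhdsGT_zero.const_mul_atTop hC₁)
  filter_upwards [hscale.eventually_ge_atTop (2 ^ J₀), self_mem_nhdsWithin] with ε hε hε0
  have hε0 : 0 < ε := hε0
  obtain ⟨n, hyn, hny⟩ := exists_two_pow_le_two_mul ((one_le_pow₀ one_le_two).trans hε)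
  have hJn : J₀ ≤ n := (pow_le_pow_iff_right₀ (one_lt_two (α := ℝ))).1 (hε.trans hyn)
  refine le_trans (ENNReal.ofReal_le_ofReal (Real.exp_le_exp.2 (neg_le_neg ?_)))
    ((hJ₀ n hJn).trans (measure_mono (ball_subset_ball ?_)))
  · have hpow : (2 * (C₁ * ε⁻¹) ^ (1 / β)) ^ p = (2 * C₁ ^ (1 / β)) ^ p * ε ^ (-(p / β)) := by
      rw [Real.mul_rpow hC₁.le (by positivity), ← mul_assoc,
        Real.mul_rpow (x := 2 * C₁ ^ (1 / β)) (by positivity) (by positivity),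
        Real.inv_rpow hε0.le, ← Real.rpow_neg hε0.le, ← Real.rpow_mul hε0.le]
      congr 2
      ring
    rw [mul_assoc, ← hpow]
    gcongr
  · have hrad : C₁ * ((C₁ * ε⁻¹) ^ (1 / β)) ^ (-β) = ε := by
      rw [← Real.rpow_mul (by positivity), show 1 / β * -β = -1 by field_simp, Real.rpow_neg_one]
      field_simp
    calc C₁ * ((2 : ℝ) ^ n) ^ (-β) ≤ C₁ * ((C₁ * ε⁻¹) ^ (1 / β)) ^ (-β) := by
          gcongr C₁ * ?_
          exact Real.rpow_le_rpow_of_nonpos (by positivity) hyn (by linarith)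
      _ = ε := hrad

end LocalOrder

section WienerBalls

variable {W : Measure PathSpace} {β : ℝ} {ωb : PathSpace}

lemma IsWienerMeasure.upperLocOrd_le_of_mem_holderSet (hW : IsWienerMeasure W) (hβ : 0 < β)
    (hβ2 : β < 1 / 2) (h : ωb ∈ holderSet β) :
    upperLocOrd W ωb ≤ (((2 - 2 * β) / β : ℝ) : EReal) := by
  have := hW.1
  obtain ⟨K, hK, hωb⟩ := exists_mem_holderBall_of_mem_holderSet h
  have hρ := sub_pos.2 (Real.rpow_lt_one_of_one_lt_of_neg one_lt_two (neg_neg_of_pos hβ))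
  have hs : 0 < 1 - 2 * β := by linarith
  exact upperLocOrd_le_of_dyadic (by positivity) (by positivity) hβ (by linarith)
    (hW.eventually_exp_le_measure_ball hβ hβ2 hK hωb)

lemma exists_mem_holderBall_dist_lt (hβ : 0 ≤ β) (hβ1 : β ≤ 1) (ω : PathSpace) {ε : ℝ}
    (hε : 0 < ε) :
    ∃ ω' : PathSpace, dist ω ω' < ε ∧ ∃ K, 0 ≤ K ∧ ω' ∈ holderBall β K := by
  obtain ⟨q, hq⟩ := exists_polynomial_near_continuousMap 0 1 ω.1 (ε / 2) (by positivity)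
  obtain ⟨K, hK⟩ := (q.contDiff_aeval (𝕜 := ℝ) 1).locallyLipschitz.locallyLipschitzOn
    |>.exists_lipschitzOnWith_of_compact (isCompact_Icc (a := (0 : ℝ)) (b := 1))
  refine ⟨⟨q.toContinuousMapOn (Icc 0 1) - .const _ (q.eval 0), by simp⟩, ?_, K, K.2,
    fun x y => ?_⟩
  · have hnear : ∀ t : unitInterval, |q.eval (t : ℝ) - ω.1 t| < ε / 2 := fun t =>
      ((q.toContinuousMapOn (Icc 0 1) - ω.1).norm_coe_le_norm t).trans_lt hq
    rw [Subtype.dist_eq, ContinuousMap.dist_lt_iff hε]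
    intro t
    have h0 := abs_lt.1 (hnear 0)
    have ht := abs_lt.1 (hnear t)
    simp only [Icc.coe_zero, ω.2] at h0
    simp only [Real.dist_eq, ContinuousMap.sub_apply, ContinuousMap.const_apply,
      Polynomial.toContinuousMapOn_apply, Polynomial.toContinuousMap_apply, abs_lt]
    constructor <;> linarith [h0.1, h0.2, ht.1, ht.2]
  · have hxy : |(x : ℝ) - y| ≤ 1 :=
      abs_le.2 ⟨by linarith [x.2.1, y.2.2], by linarith [x.2.2, y.2.1]⟩
    calc |q.eval (x : ℝ) - q.eval 0 - (q.eval (y : ℝ) - q.eval 0)|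
        = |q.eval (x : ℝ) - q.eval (y : ℝ)| := by ring_nf
      _ ≤ K * |(x : ℝ) - y| ^ (1 : ℝ) := by
        rw [Real.rpow_one]
        exact hK.dist_le_mul _ x.2 _ y.2
      _ ≤ K * |(x : ℝ) - y| ^ β := by
        gcongr ?_ * ?_
        exact Real.rpow_le_rpow_of_exponent_ge' (abs_nonneg _) hxy hβ hβ1

lemma IsWienerMeasure.isOpenPosMeasure (hW : IsWienerMeasure W) : W.IsOpenPosMeasure where
  open_pos U hU := by
    rintro ⟨ω, hω⟩
    obtain ⟨ε, hε, hball⟩ := Metric.isOpen_iff.1 hU ω hω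
    obtain ⟨ω', hdist, K, hK, hω'⟩ :=
      exists_mem_holderBall_dist_lt (β := 1 / 4) (by norm_num) (by norm_num) ω (half_pos hε)
    have hlim : Tendsto (fun J : ℕ => (2 + (1 + K) / (1 - 2 ^ (-(1 / 4 : ℝ)))) *
        ((2 : ℝ) ^ J) ^ (-(1 / 4 : ℝ))) atTop (𝓝 (_ * 0)) :=
      ((tendsto_rpow_neg_atTop (by norm_num)).comp
        (tendsto_pow_atTop_atTop_of_one_lt one_lt_two)).const_mul _
    rw [mul_zero] at hlim
    obtain ⟨J, hJ, hrad⟩ := ((hW.eventually_exp_le_measure_ball (by norm_num) (by norm_num) hK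
      hω').and (hlim.eventually_le_const (half_pos hε))).exists
    refine ((ENNReal.ofReal_pos.2 (Real.exp_pos _)).trans_le (hJ.trans (measure_mono ?_))).ne'
    refine (ball_subset_ball' ?_).trans hball
    rw [dist_comm]
    linarith

end WienerBalls

/-! ### Independent increments and the resulting lower bounds on the local order -/

section Increments

/-- The increment of a path over the `i`-th interval of the regular grid of mesh `1 / n`. -/
def gridIncr (ω : PathSpace) (n i : ℕ) : ℝ := ω.1 (gridPt n (i + 1)) - ω.1 (gridPt n i)

lemma continuous_gridIncr (n i : ℕ) : Continuous fun ω => gridIncr ω n i := by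
  unfold gridIncr
  fun_prop

lemma abs_gridIncr_sub_le_of_mem_ball {ω ωb : PathSpace} {ε : ℝ} (h : ω ∈ ball ωb ε) (n i : ℕ) :
    |gridIncr ω n i - gridIncr ωb n i| ≤ 2 * ε := by
  have hnear : ∀ t, |ω.1 t - ωb.1 t| ≤ ε := fun t =>
    (ContinuousMap.dist_apply_le_dist t).trans (mem_ball.1 h).le
  have hl := abs_le.1 (hnear (gridPt n i))
  have hr := abs_le.1 (hnear (gridPt n (i + 1)))
  unfold gridIncr
  exact abs_le.2 ⟨by linarith [hl.2, hr.1], by linarith [hl.1, hr.2]⟩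

lemma sum_sq_gridIncr (ω : PathSpace) {n : ℕ} (hn : n ≠ 0) :
    ∑ i ∈ Finset.range n, gridIncr ω n i ^ 2 = n * Qvar ω n ^ 2 := by
  rw [Qvar, Real.sq_sqrt (by positivity)]
  simp only [gridIncr]
  field_simp

lemma sum_abs_gridIncr_le (ω : PathSpace) {n : ℕ} (hn : n ≠ 0) :
    ∑ i ∈ Finset.range n, |gridIncr ω n i| ≤ n * Qvar ω n := by
  refine le_of_sq_le_sq ?_ (mul_nonneg n.cast_nonneg (Real.sqrt_nonneg _))
  have hcs := sq_sum_le_card_mul_sum_sq (s := Finset.range n) (f := fun i => |gridIncr ω n i|)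
  simp only [sq_abs, Finset.card_range, sum_sq_gridIncr ω hn] at hcs
  linarith

variable {W : Measure PathSpace} {ωb ω : PathSpace} {ε s : ℝ} {n : ℕ}

lemma IsWienerMeasure.hasIndepIncrements (hW : IsWienerMeasure W) :
    HasIndepIncrements (fun t (ω : PathSpace) => ω.1 t) W := by
  have := hW.1
  refine fun n t ht => (IsGaussianProcess.isGaussianProcess_eval hW
    ).hasGaussianLaw_increments.iIndepFun_of_covariance_eq_zero fun i j hij => ?_
  wlog h : i < j generalizing i j
  · rw [covariance_comm, this j i hij.symm (by grind)]
  have hL2 := hW.memLp_eval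
  have hij' : (t i.succ : ℝ) ≤ t j.castSucc := ht (Fin.succ_le_castSucc_iff.2 h)
  have hi : (t i.castSucc : ℝ) ≤ t i.succ := ht i.castSucc_le_succ
  have hj : (t j.castSucc : ℝ) ≤ t j.succ := ht j.castSucc_le_succ
  rw [covariance_fun_sub_fun_sub (hL2 _) (hL2 _) (hL2 _) (hL2 _)]
  rw [hW.covariance_eval, hW.covariance_eval, hW.covariance_eval, hW.covariance_eval,
    min_eq_left hij', min_eq_left (hij'.trans hj), min_eq_left (hi.trans hij'),
    min_eq_left (hi.trans (hij'.trans hj))]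
  ring

lemma IsWienerMeasure.hasLaw_increment (hW : IsWienerMeasure W) {s t : unitInterval}
    (hst : s ≤ t) :
    HasLaw (fun ω : PathSpace => ω.1 t - ω.1 s) (gaussianReal 0 (t - s : ℝ).toNNReal) W := by
  have hst : (s : ℝ) ≤ t := hst
  have hlaw := IsGaussianProcess.hasLaw_sum hW ![t, s] ![1, -1]
  simp only [Fin.sum_univ_two, Matrix.cons_val_zero, Matrix.cons_val_one, min_self,
    min_eq_left hst, min_eq_right hst] at hlaw
  convert hlaw using 3 <;> ring

lemma IsWienerMeasure.hasLaw_gridIncr (hW : IsWienerMeasure W) {i : ℕ} (hi : i < n) :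
    HasLaw (fun ω => gridIncr ω n i) (gaussianReal 0 (n : ℝ≥0)⁻¹) W := by
  have hmesh : ((gridPt n (i + 1) : ℝ) - gridPt n i).toNNReal = (n : ℝ≥0)⁻¹ := by
    rw [coe_gridPt hi, coe_gridPt hi.le, ← sub_div]
    push_cast
    rw [add_sub_cancel_left, one_div, Real.toNNReal_inv, Real.toNNReal_natCast]
  rw [← hmesh]
  exact hW.hasLaw_increment (gridPt_mono n i.le_succ)

lemma IsWienerMeasure.iIndepFun_gridIncr (hW : IsWienerMeasure W) (n : ℕ) :
    iIndepFun (fun i ω => gridIncr ω n i) W :=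
  hW.hasIndepIncrements.nat (gridPt_mono n)

lemma IsWienerMeasure.measure_ball_le_half_pow (hW : IsWienerMeasure W) (ωb : PathSpace)
    (hn : n * (64 * ε ^ 2) ≤ 1) : W (ball ωb ε) ≤ (1 / 2) ^ n := by
  let A : ℕ → Set ℝ := fun i => Icc (gridIncr ωb n i - 2 * ε) (gridIncr ωb n i + 2 * ε)
  have hsub : ball ωb ε ⊆ ⋂ i ∈ Finset.range n, (gridIncr · n i) ⁻¹' A i := fun ω hω =>
    mem_iInter₂.2 fun i _ => by
      have hd := abs_le.1 (abs_gridIncr_sub_le_of_mem_ball hω n i)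
      exact ⟨by linarith [hd.1], by linarith [hd.2]⟩
  have hfactor : ∀ i ∈ Finset.range n, W ((gridIncr · n i) ⁻¹' A i) ≤ 1 / 2 := fun i hi => by
    have hin := Finset.mem_range.1 hi
    have hn0 : (0 : ℝ) < n := by exact_mod_cast (Nat.zero_le i).trans_lt hin
    have hv : (n : ℝ≥0)⁻¹ ≠ 0 := inv_ne_zero (by exact_mod_cast hn0.ne')
    rw [← Measure.map_apply (continuous_gridIncr n i).measurable measurableSet_Icc,
      (hW.hasLaw_gridIncr hin).map_eq]
    refine (gaussianReal_Icc_le hv _ _).trans ?_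
    rw [← ENNReal.ofReal_one, ← ENNReal.ofReal_ofNat 2, ← ENNReal.ofReal_div_of_pos two_pos]
    refine ENNReal.ofReal_le_ofReal ?_
    have hsd : 8 * ε ≤ √(2 * Real.pi * ((n : ℝ≥0)⁻¹ : ℝ≥0)) := by
      refine Real.le_sqrt_of_sq_le ?_
      push_cast
      rw [← div_eq_mul_inv, le_div_iff₀ hn0]
      linarith [Real.pi_gt_three]
    have hsd0 : 0 < √(2 * Real.pi * ((n : ℝ≥0)⁻¹ : ℝ≥0)) :=
      Real.sqrt_pos.2 (mul_pos Real.two_pi_pos (NNReal.coe_pos.2 (pos_iff_ne_zero.2 hv)))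
    rw [← div_eq_mul_inv, div_le_iff₀ hsd0]
    linarith
  calc W (ball ωb ε) ≤ W (⋂ i ∈ Finset.range n, (gridIncr · n i) ⁻¹' A i) := measure_mono hsub
    _ = ∏ i ∈ Finset.range n, W ((gridIncr · n i) ⁻¹' A i) :=
      (hW.iIndepFun_gridIncr n).measure_inter_preimage_eq_mul _ fun _ _ => measurableSet_Icc
    _ ≤ (1 / 2) ^ n := by simpa using Finset.prod_le_prod' hfactor

lemma IsWienerMeasure.measure_le_sum_mul_gridIncr (hW : IsWienerMeasure W) (n : ℕ)
    (x : ℕ → ℝ) {a : ℝ} (ha : 0 ≤ a) :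
    W.real {ω | a ≤ ∑ i ∈ Finset.range n, x i * gridIncr ω n i} ≤
      Real.exp (-a ^ 2 / (2 * ((∑ i ∈ Finset.range n, x i ^ 2) / n))) := by
  have hsub : ∀ i ∈ Finset.range n,
      HasSubgaussianMGF (fun ω => x i * gridIncr ω n i) (⟨x i ^ 2, sq_nonneg _⟩ * (n : ℝ≥0)⁻¹) W :=
    fun i hi => by
      have hlaw := hW.hasLaw_gridIncr (Finset.mem_range.1 hi)
      refine (HasSubgaussianMGF.id_map_iff hlaw.aemeasurable |>.1 ?_).const_mul (x i)
      rw [hlaw.map_eq]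
      exact hasSubgaussianMGF_gaussianReal _
  have hind : iIndepFun (fun i ω => x i * gridIncr ω n i) W :=
    (hW.iIndepFun_gridIncr n).comp (fun i y => x i * y) fun i => by fun_prop
  convert HasSubgaussianMGF.measure_sum_ge_le_of_iIndepFun hind hsub ha using 4
  push_cast
  rw [Finset.sum_div]
  rfl

/-- Every path of the ball correlates with the increments of its centre, and this correlation is
Gaussian with variance `Qvar ωb n ^ 2`. -/
lemma IsWienerMeasure.measure_ball_le_exp_Qvar (hW : IsWienerMeasure W) (hε : 0 < ε) (hn : n ≠ 0)
    (hQ : 4 * ε ≤ Qvar ωb n) :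
    W (ball ωb ε) ≤ ENNReal.ofReal (Real.exp (-((n * Qvar ωb n) ^ 2 / 8))) := by
  have := hW.1
  have hQ0 : 0 < Qvar ωb n := by linarith
  have hsub : ball ωb ε ⊆ {ω | n * Qvar ωb n ^ 2 / 2 ≤
      ∑ i ∈ Finset.range n, gridIncr ωb n i * gridIncr ω n i} := fun ω hω => by
    have hterm : ∀ i ∈ Finset.range n, gridIncr ωb n i ^ 2 - |gridIncr ωb n i| * (2 * ε) ≤
        gridIncr ωb n i * gridIncr ω n i := fun i _ => by
      have hle : |gridIncr ωb n i * (gridIncr ω n i - gridIncr ωb n i)| ≤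
          |gridIncr ωb n i| * (2 * ε) := by
        rw [abs_mul]
        gcongr
        exact abs_gridIncr_sub_le_of_mem_ball hω n i
      linarith [(abs_le.1 hle).1]
    have hsum := Finset.sum_le_sum hterm
    rw [Finset.sum_sub_distrib, sum_sq_gridIncr ωb hn, ← Finset.sum_mul] at hsum
    have hmul : (∑ i ∈ Finset.range n, |gridIncr ωb n i|) * (2 * ε) ≤
        n * Qvar ωb n * (Qvar ωb n / 2) :=
      mul_le_mul (sum_abs_gridIncr_le ωb hn) (by linarith) (by positivity) (by positivity)
    exact le_trans (by linarith) hsum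
  rw [← ofReal_measureReal]
  refine ENNReal.ofReal_le_ofReal ((measureReal_mono hsub).trans
    ((hW.measure_le_sum_mul_gridIncr n _ (by positivity)).trans_eq ?_))
  rw [sum_sq_gridIncr ωb hn]
  congr 1
  field_simp
  ring

lemma half_pow_eq_ofReal_exp (n : ℕ) :
    (1 / 2 : ℝ≥0∞) ^ n = ENNReal.ofReal (Real.exp (-(n * Real.log 2))) := by
  rw [Real.exp_neg, Real.exp_nat_mul, Real.exp_log two_pos, ← inv_pow,
    ENNReal.ofReal_pow (by positivity), ENNReal.ofReal_inv_of_pos two_pos, ENNReal.ofReal_ofNat,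
    one_div]

lemma IsWienerMeasure.two_le_lowerLocOrd (hW : IsWienerMeasure W) (ω : PathSpace) :
    ((2 : ℝ) : EReal) ≤ lowerLocOrd W ω := by
  have := hW.1
  have := hW.isOpenPosMeasure
  refine le_lowerLocOrd (C := Real.log 2 / 128) (by positivity) ?_
  filter_upwards [Ioo_mem_nhdsGT (show (0 : ℝ) < 1 / 8 by norm_num)] with ε hε
  have hε0 : 0 < ε := hε.1
  have hy : 1 ≤ (64 * ε ^ 2)⁻¹ := (one_le_inv₀ (by positivity)).2 (by nlinarith [hε.2])
  refine (hW.measure_ball_le_half_pow ω (n := ⌊(64 * ε ^ 2)⁻¹⌋₊) ?_).trans ?_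
  · calc _ ≤ (64 * ε ^ 2)⁻¹ * (64 * ε ^ 2) := by
          gcongr
          exact Nat.floor_le (by positivity)
      _ = 1 := inv_mul_cancel₀ (by positivity)
  · rw [half_pow_eq_ofReal_exp]
    refine ENNReal.ofReal_le_ofReal (Real.exp_le_exp.2 ?_)
    have hfloor := Nat.div_two_lt_floor hy
    have hlog := mul_le_mul_of_nonneg_left hfloor.le (Real.log_pos one_lt_two).le
    have hpow : Real.log 2 / 128 * ε ^ (-2 : ℝ) = Real.log 2 * ((64 * ε ^ 2)⁻¹ / 2) := by
      rw [Real.rpow_neg hε0.le, Real.rpow_two]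
      field_simp
      norm_num
    rw [hpow]
    linarith

lemma eventually_rpow_le_Qvar (hl : 0 < oreyLower ω) (hu : oreyUpper ω < s) :
    ∀ᶠ n : ℕ in atTop, (n : ℝ) ^ (-s) ≤ Qvar ω n := by
  filter_upwards [eventually_lt_of_lt_liminf hl, eventually_lt_of_limsup_lt hu,
    eventually_gt_atTop 1] with n hpos hlt hn
  have hpos : 0 < -Real.log (Qvar ω n) / Real.log n := by exact_mod_cast hpos
  have hlt : -Real.log (Qvar ω n) / Real.log n < s := by exact_mod_cast hlt
  have hlog : 0 < Real.log n := Real.log_pos (by exact_mod_cast hn)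
  have hQ0 : 0 ≤ Qvar ω n := Real.sqrt_nonneg _
  have hQ : 0 < Qvar ω n := hQ0.lt_of_ne' fun h => by
    rw [h, Real.log_zero, neg_zero, zero_div] at hpos
    exact hpos.false
  rw [div_lt_iff₀ hlog] at hlt
  rw [← Real.log_le_log_iff (by positivity) hQ, Real.log_rpow (by positivity)]
  linarith

lemma IsWienerMeasure.le_lowerLocOrd_of_rpow_le_Qvar (hW : IsWienerMeasure W) (hs : 0 < s)
    (hs1 : s < 1) (h : ∀ᶠ n : ℕ in atTop, (n : ℝ) ^ (-s) ≤ Qvar ω n) :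
    (((2 - 2 * s) / s : ℝ) : EReal) ≤ lowerLocOrd W ω := by
  have := hW.1
  have := hW.isOpenPosMeasure
  refine le_lowerLocOrd (C := (4 ^ (-(1 / s)) / 2) ^ (2 - 2 * s) / 8) (by positivity) ?_
  have hscale : Tendsto (fun ε : ℝ => (4 : ℝ) ^ (-(1 / s)) * ε ^ (-(1 / s))) (𝓝[>] 0) atTop :=
    (tendsto_rpow_neg_nhdsGT_zero (neg_neg_of_pos (by positivity))).const_mul_atTop (by positivity)
  filter_upwards [(tendsto_nat_floor_atTop.comp hscale).eventually h,
    hscale.eventually_ge_atTop 1, self_mem_nhdsWithin] with ε hQ hy hε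
  have hε : 0 < ε := hε
  set y := (4 : ℝ) ^ (-(1 / s)) * ε ^ (-(1 / s)) with hy_def
  simp only [Function.comp_apply] at hQ
  have hn : (y / 2 : ℝ) < ⌊y⌋₊ := Nat.div_two_lt_floor hy
  have hn0 : (0 : ℝ) < ⌊y⌋₊ := by linarith
  have hys : y ^ (-s) = 4 * ε := by
    rw [hy_def, ← Real.mul_rpow (by norm_num) hε.le, ← Real.rpow_mul (by positivity),
      show -(1 / s) * -s = 1 by field_simp, Real.rpow_one]
  have hradius : 4 * ε ≤ Qvar ω ⌊y⌋₊ := hys ▸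
    (Real.rpow_le_rpow_of_nonpos hn0 (Nat.floor_le (by linarith)) (by linarith)).trans hQ
  refine (hW.measure_ball_le_exp_Qvar hε (by exact_mod_cast hn0.ne') hradius).trans
    (ENNReal.ofReal_le_ofReal (Real.exp_le_exp.2 (neg_le_neg ?_)))
  calc (4 ^ (-(1 / s)) / 2) ^ (2 - 2 * s) / 8 * ε ^ (-((2 - 2 * s) / s))
      = (y / 2) ^ (2 - 2 * s) / 8 := by
        rw [hy_def, mul_div_right_comm, Real.mul_rpow (by positivity) (by positivity),
          ← Real.rpow_mul hε.le, show -(1 / s) * (2 - 2 * s) = -((2 - 2 * s) / s) by ring]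
        ring
    _ ≤ (⌊y⌋₊ : ℝ) ^ (2 - 2 * s) / 8 := by
        have : 0 ≤ 2 - 2 * s := by linarith
        gcongr
    _ = (⌊y⌋₊ * (⌊y⌋₊ : ℝ) ^ (-s)) ^ 2 / 8 := by
        rw [← Real.rpow_one_add' hn0.le (by linarith), ← Real.rpow_mul_natCast hn0.le]
        congr 2
        push_cast
        ring
    _ ≤ (⌊y⌋₊ * Qvar ω ⌊y⌋₊) ^ 2 / 8 := by gcongr

end Increments

/-! ### Local orders of the Wiener measure -/

section WienerLocalOrder

variable {W : Measure PathSpace} {α : ℝ} {ω : PathSpace}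

lemma tendsto_two_sub_div (hα : 0 < α) :
    Tendsto (fun s : ℝ => (((2 - 2 * s) / s : ℝ) : EReal)) (𝓝 α)
      (𝓝 ((2 * (α⁻¹ - 1) : ℝ) : EReal)) := by
  have hcont : ContinuousAt (fun s : ℝ => (2 - 2 * s) / s) α := by
    fun_prop (disch := exact hα.ne')
  rw [show 2 * (α⁻¹ - 1) = (2 - 2 * α) / α by field_simp]
  exact (continuous_coe_real_ereal.tendsto _).comp hcont

lemma IsWienerMeasure.upperLocOrd_le_of_mem_holderMinus (hW : IsWienerMeasure W) (hα : 0 < α)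
    (h : ω ∈ holderMinus α) :
    upperLocOrd W ω ≤ ((max 2 (2 * (α⁻¹ - 1)) : ℝ) : EReal) := by
  have hmin : 0 < min α (1 / 2) := by positivity
  have hval : max 2 (2 * (α⁻¹ - 1)) = 2 * ((min α (1 / 2))⁻¹ - 1) := by
    rcases le_total α (1 / 2) with hle | hle
    · have : 2 ≤ α⁻¹ := (le_inv_comm₀ two_pos hα).2 (by linarith)
      rw [min_eq_left hle, max_eq_right (by linarith)]
    · have : α⁻¹ ≤ 2 := (inv_le_comm₀ hα two_pos).2 (by linarith)
      rw [min_eq_right hle, max_eq_left (by linarith)]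
      norm_num
  rw [hval]
  refine ge_of_tendsto ((tendsto_two_sub_div hmin).mono_left
    (nhdsWithin_le_nhds (s := Iio (min α (1 / 2))))) ?_
  filter_upwards [Ioo_mem_nhdsLT hmin] with β hβ
  have hβ' := lt_min_iff.1 hβ.2
  exact hW.upperLocOrd_le_of_mem_holderSet hβ.1 hβ'.2 (mem_iInter₂.1 h β ⟨hβ.1, hβ'.1⟩)

lemma IsWienerMeasure.le_lowerLocOrd_of_oreyUpper_eq (hW : IsWienerMeasure W) (hα : 0 < α)
    (hα1 : α < 1) (hl : 0 < oreyLower ω) (hu : oreyUpper ω = α) :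
    ((2 * (α⁻¹ - 1) : ℝ) : EReal) ≤ lowerLocOrd W ω := by
  refine le_of_tendsto ((tendsto_two_sub_div hα).mono_left (nhdsWithin_le_nhds (s := Ioi α))) ?_
  filter_upwards [Ioo_mem_nhdsGT hα1] with s hs
  refine hW.le_lowerLocOrd_of_rpow_le_Qvar (hα.trans hs.1) hs.2 (eventually_rpow_le_Qvar hl ?_)
  rw [hu]
  exact_mod_cast hs.1

theorem IsWienerMeasure.locOrd_eq_of_mem_holderCrit (hW : IsWienerMeasure W)
    (hα : α ∈ Ioo (0 : ℝ) 1) (h : ω ∈ holderCrit α) :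
    lowerLocOrd W ω = ((max 2 (2 * (α⁻¹ - 1)) : ℝ) : EReal) ∧
      upperLocOrd W ω = ((max 2 (2 * (α⁻¹ - 1)) : ℝ) : EReal) := by
  obtain ⟨hm, hl, hu⟩ := h
  have hlower : ((max 2 (2 * (α⁻¹ - 1)) : ℝ) : EReal) ≤ lowerLocOrd W ω := by
    rw [EReal.coe_strictMono.monotone.map_max]
    refine max_le (hW.two_le_lowerLocOrd ω) (hW.le_lowerLocOrd_of_oreyUpper_eq hα.1 hα.2 ?_ hu)
    rw [hl]
    exact_mod_cast hα.1
  have hupper := hW.upperLocOrd_le_of_mem_holderMinus hα.1 hm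
  have hle := lowerLocOrd_le_upperLocOrd W ω
  exact ⟨(hle.trans hupper).antisymm hlower, hupper.antisymm (hlower.trans hle)⟩

theorem IsWienerMeasure.isLeast_range_lowerLocOrd (hW : IsWienerMeasure W) :
    IsLeast (range (lowerLocOrd W)) 2 := by
  have hzero : (⟨0, rfl⟩ : PathSpace) ∈ holderMinus (1 / 2) :=
    mem_iInter₂.2 fun β _ => ⟨0, fun x y => by simp⟩
  have hupper := hW.upperLocOrd_le_of_mem_holderMinus one_half_pos hzero
  norm_num at hupper
  refine ⟨⟨⟨0, rfl⟩, ?_⟩, forall_mem_range.2 hW.two_le_lowerLocOrd⟩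
  exact ((lowerLocOrd_le_upperLocOrd _ _).trans hupper).antisymm (hW.two_le_lowerLocOrd _)

end WienerLocalOrder

/-! ### Hausdorff measures of Hölder classes -/

section HausdorffCovers

variable {X : Type*} [MetricSpace X] {h : ℝ → ℝ} {E : Set X}

lemma hMeasAux_le_tsum {ι : Type*} [Countable ι] [Infinite ι] {δ : ℝ≥0∞} {c : ι → X} {r : ι → ℝ}
    (hr : ∀ i, 0 < r i ∧ ENNReal.ofReal (r i) ≤ δ) (hE : E ⊆ ⋃ i, ball (c i) (r i)) :
    hMeasAux h δ E ≤ ∑' i, ENNReal.ofReal (h (r i)) := by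
  obtain ⟨e⟩ : Nonempty (ℕ ≃ ι) := nonempty_equiv_of_countable
  have hcov : E ⊆ ⋃ n, ball (c (e n)) (r (e n)) :=
    hE.trans_eq (e.surjective.iUnion_comp fun i => ball (c i) (r i)).symm
  calc hMeasAux h δ E ≤ ∑' n, ENNReal.ofReal (h (r (e n))) :=
        iInf₂_le_of_le (c ∘ e) (r ∘ e) (iInf₂_le_of_le (fun n => hr (e n)) hcov le_rfl)
    _ = ∑' i, ENNReal.ofReal (h (r i)) := e.tsum_eq fun i => ENNReal.ofReal (h (r i))

lemma hMeas_ne_top_of_finite_covers {A : Set X} {E : ℕ → Set X} (hA : A ⊆ ⋃ N, E N)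
    (hcov : ∀ N, ∀ δ > 0, ∀ τ > 0, ∃ (r : ℝ) (F : Finset X), 0 < r ∧ r ≤ δ ∧ F.Nonempty ∧
      E N ⊆ ⋃ c ∈ F, ball c r ∧ F.card * h r ≤ τ) :
    hMeas h A ≠ ∞ := by
  refine ne_top_of_le_ne_top ENNReal.one_ne_top (iSup₂_le fun δ hδ => ?_)
  obtain ⟨τ, hτ0, hτ⟩ := ENNReal.exists_pos_sum_of_countable one_ne_zero ℕ
  have hδ1 : min δ 1 ≠ ∞ := ne_top_of_le_ne_top ENNReal.one_ne_top (min_le_right _ _)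
  have hδ0 : 0 < (min δ 1).toReal := ENNReal.toReal_pos (lt_min hδ one_pos).ne' hδ1
  choose r F hr hrδ hF hE hcard using fun N => hcov N _ hδ0 (τ N) (hτ0 N)
  have : ∀ N, Nonempty (F N) := fun N => (hF N).to_subtype
  have : Infinite (Σ N, F N) := .of_surjective Sigma.fst Sigma.fst_surjective
  have hrδ' : ∀ N, ENNReal.ofReal (r N) ≤ δ := fun N =>
    (ENNReal.ofReal_le_of_le_toReal (hrδ N)).trans (min_le_left _ _)
  have hsub : A ⊆ ⋃ i : Σ N, F N, ball (i.2 : X) (r i.1) := fun x hx => by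
    obtain ⟨N, hN⟩ := mem_iUnion.1 (hA hx)
    obtain ⟨c, hc, hxc⟩ := mem_iUnion₂.1 (hE N hN)
    exact mem_iUnion.2 ⟨⟨N, c, hc⟩, hxc⟩
  calc hMeasAux h δ A ≤ ∑' i : Σ N, F N, ENNReal.ofReal (h (r i.1)) :=
        hMeasAux_le_tsum (fun i => ⟨hr i.1, hrδ' i.1⟩) hsub
    _ = ∑' N, ENNReal.ofReal ((F N).card * h (r N)) := by
        simp only [ENNReal.tsum_sigma', tsum_fintype, Finset.sum_const, Finset.card_univ,
          Fintype.card_coe, nsmul_eq_mul, ENNReal.ofReal_mul (Nat.cast_nonneg _),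
          ENNReal.ofReal_natCast]
    _ ≤ ∑' N, (τ N : ℝ≥0∞) := ENNReal.tsum_le_tsum fun N => ENNReal.ofReal_le_coe.2 (hcard N)
    _ ≤ 1 := hτ.le

lemma exists_finset_cover_of_code {κ : Type*} {S : Finset κ} {code : X → κ} {r : ℝ}
    (hne : E.Nonempty) (hS : ∀ x ∈ E, code x ∈ S)
    (hr : ∀ x ∈ E, ∀ y ∈ E, code x = code y → dist x y < r) :
    ∃ F : Finset X, F.Nonempty ∧ F.card ≤ S.card ∧ E ⊆ ⋃ c ∈ F, ball c r := by
  classical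
  have : Nonempty X := ⟨hne.some⟩
  have hrep : ∀ x ∈ E, Function.invFunOn code E (code x) ∈ E ∧
      code (Function.invFunOn code E (code x)) = code x := fun x hx =>
    ⟨Function.invFunOn_mem ⟨x, hx, rfl⟩, Function.invFunOn_eq ⟨x, hx, rfl⟩⟩
  refine ⟨S.image (Function.invFunOn code E), ⟨_, Finset.mem_image_of_mem _ (hS _ hne.some_mem)⟩,
    Finset.card_image_le, fun x hx => ?_⟩
  exact mem_iUnion₂.2 ⟨_, Finset.mem_image_of_mem _ (hS x hx),
    hr x hx _ (hrep x hx).1 (hrep x hx).2.symm⟩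

end HausdorffCovers

section HolderCovers

variable {α β γ K b : ℝ} {ω ω' : PathSpace} {n : ℕ}

lemma floor_mul_le (n : ℕ) (t : unitInterval) : ⌊(t : ℝ) * n⌋₊ ≤ n :=
  Nat.floor_le_of_le (mul_le_of_le_one_left n.cast_nonneg t.2.2)

lemma abs_sub_gridPt_floor_le (hn : n ≠ 0) (t : unitInterval) :
    |(t : ℝ) - gridPt n ⌊(t : ℝ) * n⌋₊| ≤ (n : ℝ)⁻¹ := by
  have hn0 : (0 : ℝ) < n := by exact_mod_cast hn.bot_lt
  have hfloor := Nat.floor_le (mul_nonneg t.2.1 hn0.le)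
  have hlt := Nat.lt_floor_add_one ((t : ℝ) * n)
  have hscale : (t : ℝ) - ⌊(t : ℝ) * n⌋₊ / n = (t * n - ⌊(t : ℝ) * n⌋₊) * (n : ℝ)⁻¹ := by
    field_simp
  rw [coe_gridPt (floor_mul_le n t), hscale,
    abs_of_nonneg (mul_nonneg (by linarith) (by positivity))]
  exact mul_le_of_le_one_left (by positivity) (by linarith)

lemma dist_le_of_mem_holderBall (hβ : 0 ≤ β) (hK : 0 ≤ K) (hω : ω ∈ holderBall β K)
    (hω' : ω' ∈ holderBall β K) (hn : n ≠ 0)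
    (hgrid : ∀ i ≤ n, |ω.1 (gridPt n i) - ω'.1 (gridPt n i)| ≤ b) :
    dist ω ω' ≤ b + 2 * (K * (n : ℝ)⁻¹ ^ β) := by
  refine (ContinuousMap.dist_le ?_).2 fun t => ?_
  · have hb : 0 ≤ b := (abs_nonneg _).trans (hgrid 0 n.zero_le)
    positivity
  have hnear := abs_sub_gridPt_floor_le hn t
  have hosc := abs_le.1 (abs_sub_le_of_mem_holderBall hβ hK hω hnear)
  have hosc' := abs_le.1 (abs_sub_le_of_mem_holderBall hβ hK hω' hnear)
  have hmid := abs_le.1 (hgrid _ (floor_mul_le n t))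
  rw [Real.dist_eq, abs_le]
  constructor <;> linarith [hosc.1, hosc.2, hosc'.1, hosc'.2, hmid.1, hmid.2]

lemma abs_le_of_mem_holderBall (hβ : 0 ≤ β) (hK : 0 ≤ K) (h : ω ∈ holderBall β K)
    (t : unitInterval) : |ω.1 t| ≤ K := by
  have hle := abs_sub_le_of_mem_holderBall hβ hK h (x := t) (y := 0) (d := 1)
    (by simpa [abs_of_nonneg t.2.1] using t.2.2)
  simpa [ω.2] using hle

lemma floor_mem_Icc_of_abs_le {x : ℝ} (hx : |x| ≤ n) : ⌊x⌋ ∈ Finset.Icc (-n : ℤ) n := by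
  have hx := abs_le.1 hx
  refine Finset.mem_Icc.2 ⟨Int.le_floor.2 (by exact_mod_cast hx.1), ?_⟩
  exact_mod_cast (Int.floor_le x).trans hx.2

/-- The paths are coded by their values at the grid points, rounded to multiples of `K / n`. -/
lemma exists_finset_cover_holderBall (hβ : 0 ≤ β) (hβ1 : β ≤ 1) (hK : 0 < K) (hn : n ≠ 0) :
    ∃ F : Finset PathSpace, F.Nonempty ∧ F.card ≤ (2 * n + 1) ^ (n + 1) ∧
      holderBall β K ⊆ ⋃ c ∈ F, ball c (4 * K * (n : ℝ)⁻¹ ^ β) := by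
  have hn1 : (1 : ℝ) ≤ n := by exact_mod_cast Nat.one_le_iff_ne_zero.2 hn
  have hstep : 0 < K / n := by positivity
  let code : PathSpace → Fin (n + 1) → ℤ := fun ω i => ⌊ω.1 (gridPt n i) / (K / n)⌋
  let S : Finset (Fin (n + 1) → ℤ) := Fintype.piFinset fun _ => Finset.Icc (-n : ℤ) n
  have hne : (holderBall β K).Nonempty := ⟨⟨0, rfl⟩, fun x y => by
    simp only [ContinuousMap.zero_apply, sub_self, abs_zero]
    positivity⟩
  have hS : ∀ ω ∈ holderBall β K, code ω ∈ S := fun ω hω => Fintype.mem_piFinset.2 fun i => by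
    refine floor_mem_Icc_of_abs_le ?_
    rw [abs_div, abs_of_pos hstep, div_le_iff₀ hstep, mul_div_cancel₀ _ (by positivity)]
    exact abs_le_of_mem_holderBall hβ hK.le hω _
  have hdist : ∀ ω ∈ holderBall β K, ∀ ω' ∈ holderBall β K, code ω = code ω' →
      dist ω ω' < 4 * K * (n : ℝ)⁻¹ ^ β := fun ω hω ω' hω' hcode => by
    have hgrid : ∀ i ≤ n, |ω.1 (gridPt n i) - ω'.1 (gridPt n i)| ≤ K / n := fun i hi => by
      have hlt := Int.abs_sub_lt_one_of_floor_eq_floor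
        (congrFun hcode ⟨i, Nat.lt_succ_of_le hi⟩)
      rw [← sub_div, abs_div, abs_of_pos hstep, div_lt_one hstep] at hlt
      exact hlt.le
    have hpow : K / n ≤ K * (n : ℝ)⁻¹ ^ β := by
      rw [div_eq_mul_inv]
      gcongr
      exact Real.self_le_rpow_of_le_one (by positivity) (inv_le_one_of_one_le₀ hn1) hβ1
    linarith [dist_le_of_mem_holderBall hβ hK.le hω hω' hn hgrid, hstep]
  obtain ⟨F, hF, hcard, hcov⟩ := exists_finset_cover_of_code hne hS hdist
  refine ⟨F, hF, hcard.trans_eq ?_, hcov⟩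
  rw [Fintype.card_piFinset_const, Int.card_Icc]
  congr 1
  omega

lemma tendsto_pow_mul_exp_neg_rpow {c p : ℝ} (hc : 0 < c) (hp : 1 < p) :
    Tendsto (fun n : ℕ => (2 * n + 1 : ℝ) ^ (n + 1) * Real.exp (-(c * (n : ℝ) ^ p))) atTop
      (𝓝 0) := by
  have hpow : Tendsto (fun x : ℝ => x ^ (p - 1)) atTop atTop :=
    tendsto_rpow_atTop (sub_pos.2 hp)
  have hlittle : (fun x => 2 * Real.log x + (2 * Real.log 3 + 1)) =o[atTop]
      fun x : ℝ => x ^ (p - 1) :=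
    ((isLittleO_log_rpow_atTop (sub_pos.2 hp)).const_mul_left 2).add
      (Asymptotics.isLittleO_const_left.2 (.inr (tendsto_norm_atTop_atTop.comp hpow)))
  refine squeeze_zero' (.of_forall fun n => by positivity) ?_
    (Real.tendsto_exp_neg_atTop_nhds_zero.comp tendsto_natCast_atTop_atTop)
  filter_upwards [tendsto_natCast_atTop_atTop.eventually (hlittle.bound hc),
    eventually_ge_atTop 1] with n hn hn1
  have hn1' : (1 : ℝ) ≤ n := by exact_mod_cast hn1
  have hn0 : (0 : ℝ) < n := by linarith
  have hlog : 2 * Real.log (3 * n) + 1 ≤ c * (n : ℝ) ^ (p - 1) := by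
    rw [Real.norm_of_nonneg (by positivity : (0 : ℝ) ≤ (n : ℝ) ^ (p - 1))] at hn
    rw [Real.log_mul three_ne_zero hn0.ne']
    linarith [Real.le_norm_self (2 * Real.log n + (2 * Real.log 3 + 1))]
  calc (2 * n + 1 : ℝ) ^ (n + 1) * Real.exp (-(c * (n : ℝ) ^ p))
      ≤ (3 * n) ^ (2 * n) * Real.exp (-(c * (n : ℝ) ^ p)) := by
        gcongr ?_ * _
        exact (pow_le_pow_left₀ (by positivity) (by linarith) _).trans
          (pow_le_pow_right₀ (by linarith) (by omega))
    _ = Real.exp (n * (2 * Real.log (3 * n)) - c * (n * (n : ℝ) ^ (p - 1))) := by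
        rw [← Real.rpow_one_add' hn0.le (by linarith), add_sub_cancel, sub_eq_add_neg,
          Real.exp_add, ← Real.exp_log (show (0 : ℝ) < 3 * n by positivity), ← Real.exp_nat_mul,
          Real.log_exp]
        congr 2
        push_cast
        ring
    _ ≤ Real.exp (-n) := by
        refine Real.exp_le_exp.2 ?_
        linarith [mul_le_mul_of_nonneg_left hlog hn0.le]

lemma hMeas_holderMinus_ne_top (hα : α ∈ Ioc (0 : ℝ) 1) (hγ : α⁻¹ < γ) :
    hMeas (fun ε : ℝ => Real.exp (-(ε ^ (-γ)))) (holderMinus α) ≠ ∞ := by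
  have hγ0 : 0 < γ := (inv_pos.2 hα.1).trans hγ
  obtain ⟨β, hγβ, hβα⟩ := exists_between (inv_lt_of_inv_lt₀ hα.1 hγ)
  have hβ : 0 < β := (inv_pos.2 hγ0).trans hγβ
  have hβγ : 1 < β * γ := (inv_lt_iff_one_lt_mul₀ hγ0).1 hγβ
  refine hMeas_ne_top_of_finite_covers (E := fun N : ℕ => holderBall β (N + 1))
    (fun ω hω => ?_) fun N δ hδ τ hτ => ?_
  · obtain ⟨K, -, hK⟩ := exists_mem_holderBall_of_mem_holderSet (mem_iInter₂.1 hω β ⟨hβ, hβα⟩)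
    obtain ⟨N, hN⟩ := exists_nat_ge K
    refine mem_iUnion.2 ⟨N, fun x y => (hK x y).trans ?_⟩
    gcongr
    linarith
  · have hradius : Tendsto (fun n : ℕ => 4 * (N + 1 : ℝ) * (n : ℝ)⁻¹ ^ β) atTop (𝓝 0) := by
      have hinv := (tendsto_inv_atTop_nhds_zero_nat (𝕜 := ℝ)).rpow_const (.inr hβ.le)
      simpa [Real.zero_rpow hβ.ne'] using hinv.const_mul (4 * (N + 1 : ℝ))
    obtain ⟨n, hrδ, hnτ, hn⟩ := ((hradius.eventually (gt_mem_nhds hδ)).and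
      (((tendsto_pow_mul_exp_neg_rpow (c := (4 * (N + 1 : ℝ)) ^ (-γ)) (by positivity)
        hβγ).eventually (gt_mem_nhds hτ)).and (eventually_ne_atTop 0))).exists
    have hn0 : (0 : ℝ) < n := by exact_mod_cast hn.bot_lt
    obtain ⟨F, hF, hcard, hcov⟩ := exists_finset_cover_holderBall hβ.le (hβα.le.trans hα.2)
      (show (0 : ℝ) < N + 1 by positivity) hn
    refine ⟨_, F, by positivity, hrδ.le, hF, hcov, le_trans ?_ hnτ.le⟩
    have hgauge : (4 * (N + 1 : ℝ) * (n : ℝ)⁻¹ ^ β) ^ (-γ) =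
        (4 * (N + 1 : ℝ)) ^ (-γ) * (n : ℝ) ^ (β * γ) := by
      rw [Real.mul_rpow (by positivity) (by positivity), ← Real.rpow_mul (by positivity),
        Real.inv_rpow hn0.le, ← Real.rpow_neg hn0.le, mul_neg, neg_neg]
    rw [hgauge]
    gcongr
    exact_mod_cast hcard

theorem ordH_holderMinus_le (hα : α ∈ Ioc (0 : ℝ) 1) :
    ordH (holderMinus α) ≤ ENNReal.ofReal α⁻¹ :=
  iSup₂_le fun _ hγ => ENNReal.ofReal_le_ofReal <|
    le_of_not_gt fun hlt => hMeas_holderMinus_ne_top hα hlt hγ.2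

end HolderCovers

/-! ### Paths with large second differences are critical -/

section OreyExponent

variable {α β p q c K a : ℝ} {ω : PathSpace} {j k n : ℕ}

lemma Qvar_le_of_mem_holderBall (hβ : 0 ≤ β) (hK : 0 ≤ K) (hω : ω ∈ holderBall β K)
    (hn : n ≠ 0) : Qvar ω n ≤ K * (n : ℝ)⁻¹ ^ β := by
  have hn0 : (0 : ℝ) < n := by exact_mod_cast hn.bot_lt
  have hincr : ∀ i ∈ Finset.range n, gridIncr ω n i ^ 2 ≤ (K * (n : ℝ)⁻¹ ^ β) ^ 2 := fun i hi => by
    have hi := Finset.mem_range.1 hi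
    have habs : |gridIncr ω n i| ≤ K * (n : ℝ)⁻¹ ^ β := by
      refine abs_sub_le_of_mem_holderBall hβ hK hω (le_of_eq ?_)
      rw [coe_gridPt hi, coe_gridPt hi.le, ← sub_div, Nat.cast_succ, add_sub_cancel_left, one_div,
        abs_of_pos (by positivity)]
    exact sq_le_sq' (abs_le.1 habs).1 (abs_le.1 habs).2
  have hsum := Finset.sum_le_card_nsmul _ _ _ hincr
  rw [sum_sq_gridIncr ω hn, Finset.card_range, nsmul_eq_mul] at hsum
  exact le_of_sq_le_sq (le_of_mul_le_mul_left hsum hn0) (by positivity)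

lemma abs_sub_le_sum_abs_gridIncr (ω : PathSpace) (n : ℕ) {l m : ℕ} (hlm : l ≤ m) :
    |ω.1 (gridPt n m) - ω.1 (gridPt n l)| ≤ ∑ i ∈ Finset.Ico l m, |gridIncr ω n i| := by
  rw [← Finset.sum_Ico_sub (fun i => ω.1 (gridPt n i)) hlm]
  exact Finset.abs_sum_le_sum_abs _ _

lemma monotone_floor_mul (n : ℕ) : Monotone fun t : unitInterval => ⌊(t : ℝ) * n⌋₊ :=
  fun _ _ hst => Nat.floor_mono
    (mul_le_mul_of_nonneg_right (Subtype.coe_le_coe.2 hst) n.cast_nonneg)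

lemma abs_sub_le_sum_abs_gridIncr_add (hβ : 0 ≤ β) (hK : 0 ≤ K) (hω : ω ∈ holderBall β K)
    (hn : n ≠ 0) {s t : unitInterval} (hst : s ≤ t) :
    |ω.1 t - ω.1 s| ≤
      ∑ i ∈ Finset.Ico ⌊(s : ℝ) * n⌋₊ ⌊(t : ℝ) * n⌋₊, |gridIncr ω n i| +
        2 * (K * (n : ℝ)⁻¹ ^ β) := by
  have hnear : ∀ x : unitInterval, |ω.1 x - ω.1 (gridPt n ⌊(x : ℝ) * n⌋₊)| ≤ K * (n : ℝ)⁻¹ ^ β :=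
    fun x => abs_sub_le_of_mem_holderBall hβ hK hω (abs_sub_gridPt_floor_le hn x)
  have hgrid := abs_le.1 (abs_sub_le_sum_abs_gridIncr ω n (monotone_floor_mul n hst))
  have hs := abs_le.1 (hnear s)
  have ht := abs_le.1 (hnear t)
  exact abs_le.2 ⟨by linarith [hgrid.1, hs.1, hs.2, ht.1, ht.2],
    by linarith [hgrid.2, hs.1, hs.2, ht.1, ht.2]⟩

lemma gridPt_two_pow_le_midpoint (j k : ℕ) :
    gridPt (2 ^ j) k ≤ gridPt (2 ^ (j + 1)) (2 * k + 1) ∧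
      gridPt (2 ^ (j + 1)) (2 * k + 1) ≤ gridPt (2 ^ j) (k + 1) := by
  rw [← gridPt_two_pow_succ j k, ← gridPt_two_pow_succ j (k + 1)]
  exact ⟨gridPt_mono _ (by omega), gridPt_mono _ (by omega)⟩

lemma abs_secDiff_le_sum_abs_gridIncr_add (hβ : 0 ≤ β) (hK : 0 ≤ K) (hω : ω ∈ holderBall β K)
    (hn : n ≠ 0) (j k : ℕ) :
    |secDiff ω.1 j k| ≤
      (∑ i ∈ Finset.Ico ⌊(gridPt (2 ^ j) k : ℝ) * n⌋₊ ⌊(gridPt (2 ^ j) (k + 1) : ℝ) * n⌋₊,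
        |gridIncr ω n i|) / 2 + 2 * (K * (n : ℝ)⁻¹ ^ β) := by
  obtain ⟨hlm, hmr⟩ := gridPt_two_pow_le_midpoint j k
  have hleft := abs_le.1 (abs_sub_le_sum_abs_gridIncr_add hβ hK hω hn hlm)
  have hright := abs_le.1 (abs_sub_le_sum_abs_gridIncr_add hβ hK hω hn hmr)
  rw [← Finset.sum_Ico_consecutive _ (monotone_floor_mul n hlm) (monotone_floor_mul n hmr), secDiff,
    abs_le]
  constructor <;> linarith [hleft.1, hleft.2, hright.1, hright.2]

/-- Each of the `2 ^ j` dyadic intervals contributes at least `a` to the variation of `ω` on the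
grid of mesh `1 / n`. -/
lemma two_pow_mul_le_mul_Qvar (hβ : 0 ≤ β) (hK : 0 ≤ K) (hω : ω ∈ holderBall β K) (hn : n ≠ 0)
    (ha : ∀ k < 2 ^ j, a ≤ |secDiff ω.1 j k|) (hKa : 4 * K * (n : ℝ)⁻¹ ^ β ≤ a) :
    2 ^ j * a ≤ n * Qvar ω n := by
  let N : ℕ → ℕ := fun k => ⌊(gridPt (2 ^ j) k : ℝ) * n⌋₊
  let V : ℕ → ℝ := fun m => ∑ i ∈ Finset.range m, |gridIncr ω n i|
  have hN : Monotone N := (monotone_floor_mul n).comp (gridPt_mono _)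
  have hblock : ∀ k ∈ Finset.range (2 ^ j), a ≤ V (N (k + 1)) - V (N k) := fun k hk => by
    have hle := abs_secDiff_le_sum_abs_gridIncr_add hβ hK hω hn j k
    rw [Finset.sum_Ico_eq_sub _ (hN k.le_succ)] at hle
    linarith [ha k (Finset.mem_range.1 hk)]
  have hN0 : N 0 = 0 := by simp [N, gridPt_zero_right]
  have hN1 : N (2 ^ j) = n := by simp [N, gridPt_self]
  calc 2 ^ j * a = ∑ _k ∈ Finset.range (2 ^ j), a := by simp
    _ ≤ ∑ k ∈ Finset.range (2 ^ j), (V (N (k + 1)) - V (N k)) := Finset.sum_le_sum hblock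
    _ = V n - V 0 := by rw [Finset.sum_range_sub (fun k => V (N k)), hN0, hN1]
    _ = ∑ i ∈ Finset.range n, |gridIncr ω n i| := by simp [V]
    _ ≤ n * Qvar ω n := sum_abs_gridIncr_le ω hn

lemma eventually_mul_rpow_le (c : ℝ) (hpq : p < q) :
    ∀ᶠ n : ℕ in atTop, c * (n : ℝ) ^ p ≤ (n : ℝ) ^ q := by
  have hlim : Tendsto (fun n : ℕ => (n : ℝ) ^ (q - p)) atTop atTop :=
    (tendsto_rpow_atTop (sub_pos.2 hpq)).comp tendsto_natCast_atTop_atTop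
  filter_upwards [hlim.eventually_ge_atTop c, eventually_gt_atTop 0] with n hn hn0
  have hn0 : (0 : ℝ) < n := by exact_mod_cast hn0
  calc c * (n : ℝ) ^ p ≤ (n : ℝ) ^ (q - p) * (n : ℝ) ^ p := by gcongr
    _ = (n : ℝ) ^ q := by rw [← Real.rpow_add hn0, sub_add_cancel]

lemma tendsto_neg_log_div_log {Q : ℕ → ℝ}
    (hle : ∀ β < α, ∀ᶠ n : ℕ in atTop, Q n ≤ (n : ℝ) ^ (-β))
    (hge : ∀ β > α, ∀ᶠ n : ℕ in atTop, (n : ℝ) ^ (-β) ≤ Q n) :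
    Tendsto (fun n : ℕ => -Real.log (Q n) / Real.log n) atTop (𝓝 α) := by
  have hbase : ∀ᶠ n : ℕ in atTop, (0 : ℝ) < n ∧ 0 < Real.log n := by
    filter_upwards [eventually_gt_atTop 1] with n hn
    have hn : (1 : ℝ) < n := by exact_mod_cast hn
    exact ⟨by linarith, Real.log_pos hn⟩
  refine tendsto_order.2 ⟨fun b hb => ?_, fun b hb => ?_⟩
  · obtain ⟨β, hbβ, hβα⟩ := exists_between hb
    filter_upwards [hle β hβα, hge (α + 1) (lt_add_one α), hbase] with n hQ hQ0 ⟨hn0, hlog⟩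
    have hQlog := Real.log_le_log (lt_of_lt_of_le (by positivity) hQ0) hQ
    rw [Real.log_rpow hn0] at hQlog
    rw [lt_div_iff₀ hlog]
    linarith [mul_lt_mul_of_pos_right hbβ hlog]
  · obtain ⟨β, hαβ, hβb⟩ := exists_between hb
    filter_upwards [hge β hαβ, hbase] with n hQ ⟨hn0, hlog⟩
    have hQlog := Real.log_le_log (by positivity) hQ
    rw [Real.log_rpow hn0] at hQlog
    rw [div_lt_iff₀ hlog]
    linarith [mul_lt_mul_of_pos_right hβb hlog]

lemma eventually_Qvar_le_of_mem_holderMinus (hα : 0 < α) (hω : ω ∈ holderMinus α) (hβα : β < α) :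
    ∀ᶠ n : ℕ in atTop, Qvar ω n ≤ (n : ℝ) ^ (-β) := by
  obtain ⟨γ, hγ, hγα⟩ := exists_between (max_lt hα hβα)
  obtain ⟨hγ0, hβγ⟩ := max_lt_iff.1 hγ
  obtain ⟨K, hK, hKω⟩ := exists_mem_holderBall_of_mem_holderSet (mem_iInter₂.1 hω γ ⟨hγ0, hγα⟩)
  filter_upwards [eventually_mul_rpow_le K (neg_lt_neg hβγ), eventually_ne_atTop 0] with n hn hn0
  refine (Qvar_le_of_mem_holderBall hγ0.le hK hKω hn0).trans ?_
  rwa [Real.inv_rpow n.cast_nonneg, ← Real.rpow_neg n.cast_nonneg]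

lemma rpow_one_sub_le_of_lt_two_pow_succ (hα0 : 0 ≤ α) (hα1 : α < 1) {y : ℝ} (hy : 0 ≤ y)
    (hyj : y < 2 ^ (j + 1)) : y ^ (1 - α) ≤ 2 * (2 ^ j * ((2 : ℝ) ^ j) ^ (-α)) :=
  calc y ^ (1 - α) ≤ (2 * 2 ^ j) ^ (1 - α) := by rw [← pow_succ']; gcongr
    _ = 2 ^ (1 - α) * ((2 : ℝ) ^ j) ^ (1 - α) := Real.mul_rpow zero_le_two (by positivity)
    _ ≤ 2 * ((2 : ℝ) ^ j) ^ (1 - α) := by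
        gcongr
        exact Real.rpow_le_self_of_one_le one_le_two (by linarith)
    _ = 2 * (2 ^ j * ((2 : ℝ) ^ j) ^ (-α)) := by
        rw [sub_eq_add_neg, Real.rpow_one_add' (by positivity) (by linarith)]

/-- For `ρ < 1` close to `1` and `β < α` close to `α`, the oscillations `n ^ (-β)` of `ω` at scale
`1 / n` are negligible against its second differences of size `n ^ (-ρ α)` at scale `n ^ (-ρ)`. -/
lemma eventually_le_Qvar_of_le_abs_secDiff (hα : α ∈ Ioo (0 : ℝ) 1) (hω : ω ∈ holderMinus α)
    (hc : 0 < c) (hsec : ∀ j, ∀ k < 2 ^ j, c * ((2 : ℝ) ^ j) ^ (-α) ≤ |secDiff ω.1 j k|)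
    (hβ : α < β) : ∀ᶠ n : ℕ in atTop, (n : ℝ) ^ (-β) ≤ Qvar ω n := by
  obtain ⟨hα0, hα1⟩ := hα
  have h1α : 0 < 1 - α := by linarith
  obtain ⟨ρ, hρ, hρ1⟩ := exists_between (show max 0 ((1 - β) / (1 - α)) < 1 from
    max_lt one_pos ((div_lt_one h1α).2 (by linarith)))
  obtain ⟨hρ0, hρβ⟩ := max_lt_iff.1 hρ
  rw [div_lt_iff₀ h1α] at hρβ
  obtain ⟨γ, hργ, hγα⟩ := exists_between (mul_lt_of_lt_one_left hα0 hρ1)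
  have hγ0 : 0 < γ := (mul_pos hρ0 hα0).trans hργ
  obtain ⟨K, hK, hKω⟩ := exists_mem_holderBall_of_mem_holderSet (mem_iInter₂.1 hω γ ⟨hγ0, hγα⟩)
  filter_upwards [eventually_mul_rpow_le (4 * K / c) (neg_lt_neg hργ),
    eventually_mul_rpow_le (2 / c) hρβ, eventually_ge_atTop 1] with n hsmall hlarge hn
  have hn1 : (1 : ℝ) ≤ n := by exact_mod_cast hn
  have hn0 : (0 : ℝ) < n := by linarith
  obtain ⟨j, hj, hj'⟩ := exists_nat_pow_near (Real.one_le_rpow hn1 hρ0.le) one_lt_two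
  have hosc : 4 * K * (n : ℝ)⁻¹ ^ γ ≤ c * ((2 : ℝ) ^ j) ^ (-α) := by
    have hcoarse : (n : ℝ) ^ (-(ρ * α)) ≤ ((2 : ℝ) ^ j) ^ (-α) := by
      rw [neg_mul_eq_mul_neg, Real.rpow_mul hn0.le]
      exact Real.rpow_le_rpow_of_nonpos (by positivity) hj (by linarith)
    rw [Real.inv_rpow hn0.le, ← Real.rpow_neg hn0.le]
    rw [div_mul_eq_mul_div, div_le_iff₀' hc] at hsmall
    exact hsmall.trans (by gcongr)
  have hvar := two_pow_mul_le_mul_Qvar hγ0.le hK hKω (Nat.one_le_iff_ne_zero.1 hn) (hsec j) hosc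
  have hcount : (n : ℝ) ^ (ρ * (1 - α)) ≤ 2 * (2 ^ j * ((2 : ℝ) ^ j) ^ (-α)) :=
    (Real.rpow_mul hn0.le _ _).trans_le
      (rpow_one_sub_le_of_lt_two_pow_succ hα0.le hα1 (by positivity) hj')
  rw [div_mul_eq_mul_div, div_le_iff₀' hc, sub_eq_add_neg,
    Real.rpow_add hn0, Real.rpow_one] at hlarge
  refine le_of_mul_le_mul_left ?_ hn0
  nlinarith

theorem mem_holderCrit_of_le_abs_secDiff (hα : α ∈ Ioo (0 : ℝ) 1) (hω : ω ∈ holderMinus α)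
    (hc : 0 < c) (hsec : ∀ j, ∀ k < 2 ^ j, c * ((2 : ℝ) ^ j) ^ (-α) ≤ |secDiff ω.1 j k|) :
    ω ∈ holderCrit α := by
  have hlim := EReal.tendsto_coe.2 <| tendsto_neg_log_div_log
    (fun _ => eventually_Qvar_le_of_mem_holderMinus hα.1 hω)
    (fun _ => eventually_le_Qvar_of_le_abs_secDiff hα hω hc hsec)
  exact ⟨hω, hlim.liminf_eq, hlim.limsup_eq⟩

end OreyExponent

/-! ### Paths with prescribed signs of the Faber-Schauder coefficients -/

section SignPaths

/-- The sign encoded by a Boolean: `1` for `true` and `-1` for `false`. -/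
def boolSign (b : Bool) : ℝ := cond b 1 (-1)

/-- The function on `[0, ∞)` whose graph over each `[m, m + 1]` is a tent of height one, pointing
upwards or downwards according to `s m`. -/
def tentWave (s : ℕ → Bool) (x : ℝ) : ℝ := boolSign (s ⌊x⌋₊) * (1 - |2 * (x - ⌊x⌋₊) - 1|)

variable {α β x y : ℝ} {s : ℕ → Bool} {i j k : ℕ}

lemma abs_boolSign (b : Bool) : |boolSign b| = 1 := by
  cases b <;> simp [boolSign]

lemma tentWave_natCast (s : ℕ → Bool) (m : ℕ) : tentWave s m = 0 := by
  simp [tentWave]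

lemma tentWave_of_mem_left {m : ℕ} (hx : x ∈ Icc (m : ℝ) (m + 1 / 2)) :
    tentWave s x = boolSign (s m) * (2 * (x - m)) := by
  have hfloor : ⌊x⌋₊ = m :=
    (Nat.floor_eq_iff (m.cast_nonneg.trans hx.1)).2 ⟨hx.1, by linarith [hx.2]⟩
  rw [tentWave, hfloor, abs_of_nonpos (by linarith [hx.2])]
  ring

lemma tentWave_of_mem_right {m : ℕ} (hx : x ∈ Icc (m + 1 / 2 : ℝ) (m + 1)) :
    tentWave s x = boolSign (s m) * (2 * (m + 1 - x)) := by
  rcases hx.2.eq_or_lt with rfl | hlt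
  · rw [← Nat.cast_succ, tentWave_natCast, sub_self, mul_zero, mul_zero]
  · have hm : (m : ℝ) ≤ x := by linarith [hx.1]
    have hfloor : ⌊x⌋₊ = m := (Nat.floor_eq_iff (m.cast_nonneg.trans hm)).2 ⟨hm, hlt⟩
    rw [tentWave, hfloor, abs_of_nonneg (by linarith [hx.1])]
    ring

lemma tentWave_midpoint {p : ℕ} (hx : (p : ℝ) / 2 ≤ x) (hxy : x ≤ y) (hy : y ≤ (p + 1) / 2) :
    tentWave s ((x + y) / 2) = (tentWave s x + tentWave s y) / 2 := by
  obtain ⟨m, rfl | rfl⟩ := p.even_or_odd' <;> push_cast at hx hy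
  · rw [tentWave_of_mem_left (m := m) ⟨by linarith, by linarith⟩,
      tentWave_of_mem_left (m := m) ⟨by linarith, by linarith⟩,
      tentWave_of_mem_left (m := m) ⟨by linarith, by linarith⟩]
    ring
  · rw [tentWave_of_mem_right (m := m) ⟨by linarith, by linarith⟩,
      tentWave_of_mem_right (m := m) ⟨by linarith, by linarith⟩,
      tentWave_of_mem_right (m := m) ⟨by linarith, by linarith⟩]
    ring

lemma abs_tentWave (s : ℕ → Bool) (hx : 0 ≤ x) : |tentWave s x| = 1 - |2 * (x - ⌊x⌋₊) - 1| := by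
  have htent : |2 * (x - ⌊x⌋₊) - 1| ≤ 1 :=
    abs_le.2 ⟨by linarith [Nat.floor_le hx], by linarith [Nat.lt_floor_add_one x]⟩
  rw [tentWave, abs_mul, abs_boolSign, one_mul, abs_of_nonneg (sub_nonneg.2 htent)]

lemma abs_tentWave_le_one (s : ℕ → Bool) (hx : 0 ≤ x) : |tentWave s x| ≤ 1 := by
  rw [abs_tentWave s hx]
  exact sub_le_self _ (abs_nonneg _)

lemma abs_tentWave_sub_le (s : ℕ → Bool) (hx : 0 ≤ x) (hy : 0 ≤ y) :
    |tentWave s x - tentWave s y| ≤ 2 * |x - y| := by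
  wlog hxy : x ≤ y generalizing x y
  · rw [abs_sub_comm, abs_sub_comm x]
    exact this hy hx (le_of_not_ge hxy)
  rcases (Nat.floor_mono hxy).eq_or_lt with hfloor | hfloor
  · calc |tentWave s x - tentWave s y|
        = |(|2 * (y - ⌊y⌋₊) - 1| - |2 * (x - ⌊y⌋₊) - 1|)| := by
          rw [tentWave, tentWave, hfloor, ← mul_sub, abs_mul, abs_boolSign, one_mul,
            sub_sub_sub_cancel_left]
      _ ≤ |(2 * (y - ⌊y⌋₊) - 1) - (2 * (x - ⌊y⌋₊) - 1)| := abs_abs_sub_abs_le _ _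
      _ = 2 * |x - y| := by
          rw [abs_sub_comm x, ← abs_two, ← abs_mul, abs_two]
          ring_nf
  · have hgap : (⌊x⌋₊ : ℝ) + 1 ≤ ⌊y⌋₊ := by exact_mod_cast hfloor
    have htri := abs_sub (tentWave s x) (tentWave s y)
    rw [abs_tentWave s hx, abs_tentWave s hy] at htri
    rw [abs_sub_comm x, abs_of_nonneg (sub_nonneg.2 hxy)]
    linarith [le_abs_self (2 * (x - ⌊x⌋₊) - 1), neg_abs_le (2 * (y - ⌊y⌋₊) - 1)]

lemma abs_tentWave_sub_le_rpow (s : ℕ → Bool) (hx : 0 ≤ x) (hy : 0 ≤ y) (hβ : β ∈ Ioc 0 1) :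
    |tentWave s x - tentWave s y| ≤ 2 * |x - y| ^ β := by
  rcases le_total |x - y| 1 with hle | hge
  · have hpow := Real.rpow_le_rpow_of_exponent_ge' (abs_nonneg (x - y)) hle hβ.1.le hβ.2
    rw [Real.rpow_one] at hpow
    linarith [abs_tentWave_sub_le s hx hy]
  · linarith [abs_tentWave_le_one s hx, abs_tentWave_le_one s hy,
      abs_sub (tentWave s x) (tentWave s y), Real.one_le_rpow hge hβ.1.le]

lemma abs_tentWave_two_pow_mul_sub_le (s : ℕ → Bool) (hβ : β ∈ Ioc 0 1) (j : ℕ)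
    (t u : unitInterval) : |tentWave s (2 ^ j * t) - tentWave s (2 ^ j * u)| ≤
      2 * (((2 : ℝ) ^ j) ^ β * |(t : ℝ) - u| ^ β) := by
  have hscale : |(2 : ℝ) ^ j * t - 2 ^ j * u| ^ β = ((2 : ℝ) ^ j) ^ β * |(t : ℝ) - u| ^ β := by
    rw [← mul_sub, abs_mul, abs_of_pos (by positivity),
      Real.mul_rpow (by positivity) (abs_nonneg _)]
  rw [← hscale]
  exact abs_tentWave_sub_le_rpow s (mul_nonneg (by positivity) t.2.1)
    (mul_nonneg (by positivity) u.2.1) hβ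

lemma tentWave_two_pow_mul_gridPt (s : ℕ → Bool) (hji : j ≤ i) (hk : k ≤ 2 ^ j) :
    tentWave s (2 ^ i * gridPt (2 ^ j) k) = 0 := by
  obtain ⟨m, rfl⟩ := Nat.exists_eq_add_of_le hji
  have hint : (2 : ℝ) ^ (j + m) * gridPt (2 ^ j) k = ((2 ^ m * k : ℕ) : ℝ) := by
    rw [coe_gridPt hk, pow_add]
    push_cast
    field_simp
  rw [hint, tentWave_natCast]

lemma secDiff_tentWave_of_lt (s : ℕ → Bool) (hij : i < j) (hk : k < 2 ^ j) :
    secDiff (fun t => tentWave s (2 ^ i * t)) j k = 0 := by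
  set l : unitInterval := gridPt (2 ^ j) k with hl
  set r : unitInterval := gridPt (2 ^ j) (k + 1)
  let p : ℕ := ⌊(2 : ℝ) ^ (i + 1) * l⌋₊
  have hlr : l ≤ r := gridPt_mono _ k.le_succ
  have hpl : (p : ℝ) ≤ 2 ^ (i + 1) * l := Nat.floor_le (mul_nonneg (by positivity) l.2.1)
  have hlp : (2 : ℝ) ^ (i + 1) * l < p + 1 := Nat.lt_floor_add_one _
  have hp : p + 1 ≤ 2 ^ (i + 1) := by
    have hl1 : (l : ℝ) < 1 := by
      rw [hl, coe_gridPt hk.le, div_lt_one (by positivity)]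
      exact_mod_cast hk
    have hp' : (p : ℝ) < 2 ^ (i + 1) := hpl.trans_lt (mul_lt_of_lt_one_right (by positivity) hl1)
    exact_mod_cast hp'
  have hrp : (2 : ℝ) ^ (i + 1) * r ≤ p + 1 := by
    rcases gridPt_two_pow_le_or_le (Nat.succ_le_of_lt hij) k (p + 1) with hle | hle <;>
      rw [← Subtype.coe_le_coe, coe_gridPt hp] at hle <;> push_cast at hle
    · rw [div_le_iff₀' (by positivity)] at hle
      linarith
    · rwa [le_div_iff₀' (by positivity)] at hle
  rw [pow_succ, mul_right_comm] at hpl hrp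
  rw [secDiff, coe_gridPt_two_pow_midpoint hk, mul_div_assoc', mul_add,
    tentWave_midpoint (p := p) (by linarith) (by gcongr) (by linarith), sub_self]

lemma secDiff_tentWave_of_gt (s : ℕ → Bool) (hji : j < i) (hk : k < 2 ^ j) :
    secDiff (fun t => tentWave s (2 ^ i * t)) j k = 0 := by
  rw [secDiff, tentWave_two_pow_mul_gridPt s hji (by rw [pow_succ]; omega),
    tentWave_two_pow_mul_gridPt s hji.le hk.le, tentWave_two_pow_mul_gridPt s hji.le hk]
  simp

lemma secDiff_tentWave_self (s : ℕ → Bool) (hk : k < 2 ^ j) :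
    secDiff (fun t => tentWave s (2 ^ j * t)) j k = boolSign (s k) := by
  have hmid : (2 : ℝ) ^ j * gridPt (2 ^ (j + 1)) (2 * k + 1) = k + 1 / 2 := by
    rw [coe_gridPt (by rw [pow_succ]; omega), pow_succ]
    push_cast
    field_simp
  rw [secDiff, tentWave_two_pow_mul_gridPt s le_rfl hk.le, tentWave_two_pow_mul_gridPt s le_rfl hk,
    hmid, tentWave_of_mem_left (m := k) ⟨by linarith, le_rfl⟩]
  ring

lemma norm_rpow_mul_tentWave_le (α : ℝ) (s : ℕ → Bool) (j : ℕ) (t : unitInterval) :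
    ‖((2 : ℝ) ^ (-α)) ^ j * tentWave s (2 ^ j * t)‖ ≤ ((2 : ℝ) ^ (-α)) ^ j := by
  rw [norm_mul, Real.norm_of_nonneg (by positivity)]
  exact mul_le_of_le_one_right (by positivity)
    (abs_tentWave_le_one s (mul_nonneg (by positivity) t.2.1))

lemma summable_two_rpow_neg_pow (hα : 0 < α) : Summable fun j : ℕ => ((2 : ℝ) ^ (-α)) ^ j :=
  summable_geometric_of_lt_one (by positivity)
    (Real.rpow_lt_one_of_one_lt_of_neg one_lt_two (by linarith))

lemma continuous_tentWave_two_pow_mul (s : ℕ → Bool) (j : ℕ) :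
    Continuous fun t : unitInterval => tentWave s (2 ^ j * t) := by
  refine (LipschitzWith.of_dist_le_mul (K := 2 * 2 ^ j) fun t u => ?_).continuous
  rw [Real.dist_eq, Subtype.dist_eq, Real.dist_eq]
  refine (abs_tentWave_sub_le s (mul_nonneg (by positivity) t.2.1)
    (mul_nonneg (by positivity) u.2.1)).trans_eq ?_
  rw [← mul_sub, abs_mul, abs_of_pos (by positivity)]
  push_cast
  ring

/-- The path whose `k`-th Faber-Schauder coefficient of generation `j` is `± (2 ^ j) ^ (-α)`, with
sign given by `s (j, k)`. -/
def signPath (α : ℝ) (hα : 0 < α) (s : ℕ × ℕ → Bool) : PathSpace where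
  val :=
    { toFun := fun t => ∑' j : ℕ, ((2 : ℝ) ^ (-α)) ^ j * tentWave (fun k => s (j, k)) (2 ^ j * t)
      continuous_toFun := continuous_tsum
        (fun j => continuous_const.mul (continuous_tentWave_two_pow_mul _ j))
        (summable_two_rpow_neg_pow hα) fun j t => norm_rpow_mul_tentWave_le α _ j t }
  property := by
    have hzero : ∀ s, tentWave s 0 = 0 := fun s => by simpa using tentWave_natCast s 0
    simp [hzero]

lemma hasSum_signPath (hα : 0 < α) (s : ℕ × ℕ → Bool) (t : unitInterval) :
    HasSum (fun j : ℕ => ((2 : ℝ) ^ (-α)) ^ j * tentWave (fun k => s (j, k)) (2 ^ j * t))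
      ((signPath α hα s).1 t) :=
  (Summable.of_norm_bounded (summable_two_rpow_neg_pow hα)
    fun j => norm_rpow_mul_tentWave_le α _ j t).hasSum

lemma secDiff_signPath (hα : 0 < α) (s : ℕ × ℕ → Bool) (hk : k < 2 ^ j) :
    secDiff (signPath α hα s).1 j k = boolSign (s (j, k)) * ((2 : ℝ) ^ j) ^ (-α) := by
  have hsum := hasSum_signPath hα s
  have hsec : HasSum (fun i : ℕ => ((2 : ℝ) ^ (-α)) ^ i *
      secDiff (fun t => tentWave (fun k => s (i, k)) (2 ^ i * t)) j k)
      (secDiff (signPath α hα s).1 j k) :=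
    ((hsum _).sub (((hsum _).add (hsum _)).div_const 2)).congr_fun fun i => by
      rw [secDiff]
      ring
  have hsingle := hasSum_single j (f := fun i : ℕ => ((2 : ℝ) ^ (-α)) ^ i *
      secDiff (fun t => tentWave (fun k => s (i, k)) (2 ^ i * t)) j k) fun i hij => by
    rcases hij.lt_or_gt with hlt | hgt
    · rw [secDiff_tentWave_of_lt _ hlt hk, mul_zero]
    · rw [secDiff_tentWave_of_gt _ hgt hk, mul_zero]
  rw [hsec.unique hsingle, secDiff_tentWave_self _ hk, Real.rpow_pow_comm zero_le_two, mul_comm]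

lemma signPath_mem_holderBall (hα : 0 < α) (hβ : β ∈ Ioc 0 1) (hβα : β < α)
    (s : ℕ × ℕ → Bool) : signPath α hα s ∈ holderBall β (2 / (1 - 2 ^ (β - α))) := fun x y => by
  have hgeom : HasSum (fun j : ℕ => 2 * |(x : ℝ) - y| ^ β * ((2 : ℝ) ^ (β - α)) ^ j)
      (2 * |(x : ℝ) - y| ^ β * (1 - 2 ^ (β - α))⁻¹) :=
    (hasSum_geometric_of_lt_one (by positivity)
      (Real.rpow_lt_one_of_one_lt_of_neg one_lt_two (sub_neg.2 hβα))).mul_left _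
  have hterm : ∀ j : ℕ, ‖((2 : ℝ) ^ (-α)) ^ j * tentWave (fun k => s (j, k)) (2 ^ j * x) -
      ((2 : ℝ) ^ (-α)) ^ j * tentWave (fun k => s (j, k)) (2 ^ j * y)‖ ≤
      2 * |(x : ℝ) - y| ^ β * ((2 : ℝ) ^ (β - α)) ^ j := fun j => by
    have hscale : ((2 : ℝ) ^ (β - α)) ^ j = ((2 : ℝ) ^ (-α)) ^ j * ((2 : ℝ) ^ j) ^ β := by
      rw [← Real.rpow_pow_comm zero_le_two, ← mul_pow, ← Real.rpow_add two_pos, neg_add_eq_sub]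
    rw [← mul_sub, Real.norm_eq_abs, abs_mul, abs_of_pos (by positivity), hscale]
    calc _ ≤ ((2 : ℝ) ^ (-α)) ^ j * (2 * (((2 : ℝ) ^ j) ^ β * |(x : ℝ) - y| ^ β)) := by
          gcongr
          exact abs_tentWave_two_pow_mul_sub_le _ hβ j x y
      _ = _ := by ring
  have hle := ((hasSum_signPath hα s x).sub (hasSum_signPath hα s y)).norm_le_of_bounded hgeom hterm
  refine hle.trans_eq ?_
  ring

lemma signPath_mem_holderCrit (hα : α ∈ Ioo (0 : ℝ) 1) (s : ℕ × ℕ → Bool) :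
    signPath α hα.1 s ∈ holderCrit α := by
  refine mem_holderCrit_of_le_abs_secDiff hα (mem_iInter₂.2 fun β hβ => ?_) one_pos
    fun j k hk => ?_
  · exact ⟨_, signPath_mem_holderBall hα.1 ⟨hβ.1, hβ.2.le.trans hα.2.le⟩ hβ.2 s⟩
  · rw [secDiff_signPath hα.1 s hk, abs_mul, abs_boolSign, abs_of_pos (by positivity)]

end SignPaths

/-! ### Hausdorff order of the critical Hölder class -/

section HausdorffOrder

variable {α r : ℝ}

/-- The mass distribution principle, for the push-forward of `μ` under `F`. -/
lemma hMeas_eq_top_of_measure_preimage_ball_le {X Y : Type*} [MetricSpace X] [MeasurableSpace Y]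
    (μ : Measure Y) [IsProbabilityMeasure μ] {F : Y → X} {A : Set X} (hF : ∀ y, F y ∈ A)
    {h : ℝ → ℝ} (hμ : ∀ M : ℕ, ∀ᶠ r in 𝓝[>] (0 : ℝ), ∀ c,
      M * μ (F ⁻¹' ball c r) ≤ ENNReal.ofReal (h r)) :
    hMeas h A = ∞ := by
  refine ENNReal.eq_top_of_forall_nnreal_le fun m => ?_
  obtain ⟨M, hM⟩ := exists_nat_ge m
  obtain ⟨δ, hδ, hr⟩ := mem_nhdsGT_iff_exists_Ioc_subset.1 (hμ M)
  refine le_iSup₂_of_le (ENNReal.ofReal δ) (ENNReal.ofReal_pos.2 hδ) ?_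
  refine le_iInf₂ fun c r => le_iInf₂ fun hrδ hcov => ?_
  have hcov' : univ ⊆ ⋃ n, F ⁻¹' ball (c n) (r n) := fun y _ => by
    rw [← preimage_iUnion]
    exact hcov (hF y)
  calc (m : ℝ≥0∞) ≤ M * μ univ := by
        rw [measure_univ, mul_one]
        exact_mod_cast hM
    _ ≤ M * ∑' n, μ (F ⁻¹' ball (c n) (r n)) := by
        gcongr
        exact (measure_mono hcov').trans (measure_iUnion_le _)
    _ = ∑' n, M * μ (F ⁻¹' ball (c n) (r n)) := ENNReal.tsum_mul_left.symm
    _ ≤ ∑' n, ENNReal.ofReal (h (r n)) := ENNReal.tsum_le_tsum fun n =>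
        hr ⟨(hrδ n).1, (ENNReal.ofReal_le_ofReal_iff (le_of_lt hδ)).1 (hrδ n).2⟩ _

/-- The law of a family of independent fair coin tosses. -/
def coinMeasure (ι : Type*) : Measure (ι → Bool) :=
  Measure.infinitePi fun _ => uniformOn univ

instance (ι : Type*) : IsProbabilityMeasure (coinMeasure ι) := by
  unfold coinMeasure
  infer_instance

lemma coinMeasure_forall_mem_eq {ι : Type*} (F : Finset ι) (b : ι → Bool) :
    coinMeasure ι {s | ∀ i ∈ F, s i = b i} = (1 / 2) ^ F.card := by
  have hcyl : {s : ι → Bool | ∀ i ∈ F, s i = b i} = Set.pi F fun i => {b i} := by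
    ext s
    simp
  rw [hcyl, coinMeasure, Measure.infinitePi_pi _ fun i _ => measurableSet_singleton _]
  simp only [uniformOn_univ, Measure.count_singleton, Fintype.card_bool, Nat.cast_ofNat,
    Finset.prod_const]

lemma eq_decide_secDiff_nonneg_of_signPath_mem_ball (hα : 0 < α) {s : ℕ × ℕ → Bool}
    {c : PathSpace} {j k : ℕ} (hk : k < 2 ^ j) (hr : 2 * r < ((2 : ℝ) ^ j) ^ (-α))
    (hs : signPath α hα s ∈ ball c r) : s (j, k) = decide (0 ≤ secDiff c.1 j k) := by
  have hdist : |secDiff (signPath α hα s).1 j k - secDiff c.1 j k| ≤ 2 * r := by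
    rw [← secDiff_sub]
    exact abs_secDiff_le_of_abs_le
      (fun t => (ContinuousMap.dist_apply_le_dist t).trans (mem_ball.1 hs).le) j k
  rw [secDiff_signPath hα s hk, abs_le] at hdist
  cases hb : s (j, k) <;> simp only [hb, boolSign, cond_true, cond_false] at hdist
  · exact (decide_eq_false (by linarith [hdist.2])).symm
  · exact (decide_eq_true (by linarith [hdist.1])).symm

lemma coinMeasure_signPath_preimage_ball_le (hα : 0 < α) (c : PathSpace) {j : ℕ}
    (hr : 2 * r < ((2 : ℝ) ^ j) ^ (-α)) :
    coinMeasure (ℕ × ℕ) (signPath α hα ⁻¹' ball c r) ≤ (1 / 2) ^ 2 ^ j := by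
  let F : Finset (ℕ × ℕ) := {j} ×ˢ Finset.range (2 ^ j)
  have hF : F.card = 2 ^ j := by simp [F]
  rw [← hF, ← coinMeasure_forall_mem_eq F fun i => decide (0 ≤ secDiff c.1 i.1 i.2)]
  refine measure_mono fun s hs => ?_
  rintro ⟨i, k⟩ hik
  obtain ⟨hi, hk⟩ := Finset.mem_product.1 hik
  obtain rfl := Finset.mem_singleton.1 hi
  exact eq_decide_secDiff_nonneg_of_signPath_mem_ball hα (Finset.mem_range.1 hk) hr hs

lemma coinMeasure_signPath_preimage_ball_le_exp (hα : 0 < α) (c : PathSpace)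
    (hr : r ∈ Ioc (0 : ℝ) (1 / 4)) :
    coinMeasure (ℕ × ℕ) (signPath α hα ⁻¹' ball c r) ≤
      ENNReal.ofReal (Real.exp (-(Real.log 2 / 2 * 4 ^ (-α⁻¹) * r ^ (-α⁻¹)))) := by
  obtain ⟨hr0, hr1⟩ := hr
  have h4r : 0 < 4 * r := by positivity
  obtain ⟨j, hj, hj'⟩ := exists_nat_pow_near (Real.one_le_rpow_of_pos_of_le_one_of_nonpos h4r
    (by linarith) (neg_nonpos.2 (inv_pos.2 hα).le)) one_lt_two
  have hscale : 4 * r ≤ ((2 : ℝ) ^ j) ^ (-α) := by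
    calc 4 * r = ((4 * r) ^ (-α⁻¹)) ^ (-α) := by
          rw [← Real.rpow_mul h4r.le, neg_mul_neg, inv_mul_cancel₀ hα.ne', Real.rpow_one]
      _ ≤ ((2 : ℝ) ^ j) ^ (-α) := Real.rpow_le_rpow_of_nonpos (by positivity) hj (by linarith)
  refine (coinMeasure_signPath_preimage_ball_le hα c (by linarith)).trans ?_
  rw [half_pow_eq_ofReal_exp, mul_assoc, ← Real.mul_rpow (by norm_num) hr0.le]
  refine ENNReal.ofReal_le_ofReal (Real.exp_le_exp.2 (neg_le_neg ?_))
  push_cast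
  rw [pow_succ] at hj'
  nlinarith [Real.log_pos one_lt_two]

lemma eventually_mul_exp_neg_mul_rpow_le {a p q : ℝ} (ha : 0 < a) (hq : 0 < q) (hqp : q < p)
    (M : ℝ) :
    ∀ᶠ r in 𝓝[>] (0 : ℝ), M * Real.exp (-(a * r ^ (-p))) ≤ Real.exp (-(r ^ (-q))) := by
  have hfactor : Tendsto (fun r : ℝ => a * r ^ (-(p - q)) + -1) (𝓝[>] 0) atTop :=
    tendsto_atTop_add_const_right _ _
      ((tendsto_rpow_neg_nhdsGT_zero (by linarith)).const_mul_atTop ha)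
  have hexp := Real.tendsto_exp_atTop.comp
    ((tendsto_rpow_neg_nhdsGT_zero (neg_neg_of_pos hq)).atTop_mul_atTop₀ hfactor)
  filter_upwards [hexp.eventually_ge_atTop M, self_mem_nhdsWithin] with r hM hr
  have hpow : r ^ (-q) * (a * r ^ (-(p - q)) + -1) = a * r ^ (-p) - r ^ (-q) := by
    rw [mul_add, mul_left_comm, ← Real.rpow_add hr]
    ring_nf
  rw [Function.comp_apply, hpow] at hM
  calc M * Real.exp (-(a * r ^ (-p)))
      ≤ Real.exp (a * r ^ (-p) - r ^ (-q)) * Real.exp (-(a * r ^ (-p))) := by gcongr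
    _ = Real.exp (-(r ^ (-q))) := by
        rw [← Real.exp_add]
        ring_nf

lemma hMeas_holderCrit_eq_top {γ : ℝ} (hα : α ∈ Ioo (0 : ℝ) 1) (hγ : γ ∈ Ioo 0 α⁻¹) :
    hMeas (fun ε : ℝ => Real.exp (-(ε ^ (-γ)))) (holderCrit α) = ∞ := by
  refine hMeas_eq_top_of_measure_preimage_ball_le (coinMeasure (ℕ × ℕ))
    (signPath_mem_holderCrit hα) fun M => ?_
  filter_upwards [Ioc_mem_nhdsGT (show (0 : ℝ) < 1 / 4 by norm_num),
    eventually_mul_exp_neg_mul_rpow_le (a := Real.log 2 / 2 * 4 ^ (-α⁻¹)) (by positivity)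
      hγ.1 hγ.2 M] with r hr hexp c
  refine le_trans ?_ (ENNReal.ofReal_le_ofReal hexp)
  rw [ENNReal.ofReal_mul M.cast_nonneg, ENNReal.ofReal_natCast]
  gcongr
  exact coinMeasure_signPath_preimage_ball_le_exp hα.1 c hr

lemma hMeas_mono {X : Type*} [MetricSpace X] (h : ℝ → ℝ) {A B : Set X} (hAB : A ⊆ B) :
    hMeas h A ≤ hMeas h B :=
  iSup₂_mono fun _ _ => le_iInf₂ fun c r => le_iInf₂ fun hr hcov =>
    iInf₂_le_of_le c r (iInf₂_le_of_le hr (hAB.trans hcov) le_rfl)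

lemma ordH_mono {A B : Set PathSpace} (hAB : A ⊆ B) : ordH A ≤ ordH B :=
  iSup₂_le fun γ hγ =>
    le_iSup₂_of_le γ ⟨hγ.1, top_le_iff.1 (hγ.2 ▸ hMeas_mono _ hAB)⟩ le_rfl

theorem ordH_holderCrit (hα : α ∈ Ioo (0 : ℝ) 1) :
    ordH (holderCrit α) = ENNReal.ofReal α⁻¹ := by
  refine le_antisymm ((ordH_mono fun _ hω => hω.1).trans
    (ordH_holderMinus_le ⟨hα.1, hα.2.le⟩)) (le_of_forall_lt fun b hb => ?_)
  obtain ⟨γ, hbγ, hγα⟩ := ENNReal.lt_iff_exists_nnreal_btwn.1 hb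
  have hγ0 : (0 : ℝ) < γ := by exact_mod_cast (zero_le : 0 ≤ b).trans_lt hbγ
  have hγα' : (γ : ℝ) < α⁻¹ := by
    rw [← ENNReal.ofReal_coe_nnreal] at hγα
    exact (ENNReal.ofReal_lt_ofReal_iff (inv_pos.2 hα.1)).1 hγα
  refine hbγ.trans_le (le_iSup₂_of_le (γ : ℝ) ⟨hγ0, hMeas_holderCrit_eq_top hα ⟨hγ0, hγα'⟩⟩ ?_)
  rw [ENNReal.ofReal_coe_nnreal]

end HausdorffOrder

theorem wiener_local_order_crit_general {W : Measure PathSpace} (hW : IsWienerMeasure W) {α : ℝ}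
    (hα : α ∈ Ioo (0 : ℝ) 1) :
    (∀ ωb ∈ holderCrit α,
      lowerLocOrd W ωb = ((max 2 (2 * (α⁻¹ - 1)) : ℝ) : EReal) ∧
      upperLocOrd W ωb = ((max 2 (2 * (α⁻¹ - 1)) : ℝ) : EReal)) ∧
    ordH (holderCrit α) = ENNReal.ofReal α⁻¹ ∧
    IsLeast (range (lowerLocOrd W)) (2 : EReal) :=
  ⟨fun _ => hW.locOrd_eq_of_mem_holderCrit hα, ordH_holderCrit hα, hW.isLeast_range_lowerLocOrd⟩

/-- **Local order of the Wiener measure.** For `α ∈ (0,1/2)`: at every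
`ω̄ ∈ C_α^crit` the local order of `W` exists and equals `2(α⁻¹ - 1)`;
`ord_H C_α^crit = α⁻¹`; and the minimum of the lower local order of `W` over
`Ω` equals `2`. -/
theorem wiener_local_order_crit (W : Measure PathSpace) (hW : IsWienerMeasure W)
    (α : ℝ) (hα : α ∈ Set.Ioo (0:ℝ) (1/2)) :
    (∀ ωb ∈ holderCrit α,
      lowerLocOrd W ωb = ((2 * (α⁻¹ - 1) : ℝ) : EReal) ∧
      upperLocOrd W ωb = ((2 * (α⁻¹ - 1) : ℝ) : EReal)) ∧
    ordH (holderCrit α) = ENNReal.ofReal α⁻¹ ∧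
    IsLeast (Set.range (lowerLocOrd W)) (2 : EReal) := by
  have hmax : max 2 (2 * (α⁻¹ - 1)) = 2 * (α⁻¹ - 1) := by
    have htwo : 2 < α⁻¹ := (lt_inv_comm₀ two_pos hα.1).2 (by linarith [hα.2])
    exact max_eq_right (by linarith)
  simpa only [hmax] using wiener_local_order_crit_general hW ⟨hα.1, by linarith [hα.2]⟩

end Multifractal
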